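/- In the orthogonal case, SX^j is a single SG^j(E)-orbit if and only if either n = 1, or n = 2 and det j ∈ -F^{×2}. -/

import Mathlib

open Matrix

namespace OrthPair

variable {E : Type} [Field E]

/-- `g ∈ G^j(E) = {g ∈ GL_n(E) : gᵀ j g = j}` (orthogonal case). -/
def Gj {n : ℕ} (j g : Matrix (Fin n) (Fin n) E) : Prop :=
  IsUnit g ∧ gᵀ * j * g = j

/-- `x ∈ X^j = {x ∈ G^j(E) : x·σ(x) = 1}`. -/
def Xj {n : ℕ} (σ : E → E) (j x : Matrix (Fin n) (Fin n) E) : Prop :=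
  Gj j x ∧ x * x.map σ = 1

/-- `x ∈ SX^j = X^j ∩ SL_n(E)`. -/
def SXj {n : ℕ} (σ : E → E) (j x : Matrix (Fin n) (Fin n) E) : Prop :=
  Xj σ j x ∧ x.det = 1

/-- `x'` lies in the `SG^j(E) = G^j(E) ∩ SL_n(E)`-orbit of `x` for twisted conjugation
`g·x = g x σ(g)⁻¹`. -/
def orbSG {n : ℕ} (σ : E → E) (j x x' : Matrix (Fin n) (Fin n) E) : Prop :=
  ∃ g, Gj j g ∧ g.det = 1 ∧ x' = g * x * (g.map σ)⁻¹

end OrthPair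

open OrthPair

/-!
Let `F` be the fixed field of `σ`. If `gᵀ j g` has entries in `F` and `det g` lies in `F`, then
`g σ(g)⁻¹` is a point of `SX^j`, and if it lies in the orbit of `1` then `gᵀ j g` is congruent to
`j` already over `F`. So `SX^j` can be a single orbit only if no form over `F` becomes congruent to
`j` in this way over `E` but not over `F`.

Suppose `j` has a binary summand `⟨a, b⟩` over `F` with `-ab` a nonsquare, and let `E = F(√e)`.
Norm groups of quadratic extensions have index two, so some `c` is a norm from `F(√(-eab))` but not
from `F(√(-ab))`. Then `⟨a, b⟩` represents `ac` over `E` but not over `F`, and by Witt cancellation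
there is a second orbit. The index of the norm group of `L = F(√δ)` is found by comparing the
numbers of square classes of `F` and `L`, which depend only on the degrees over `ℚ_[p]`.

In dimension at least three a summand with `-ab` a nonsquare can always be split off. In dimension
two it is missing only for the hyperbolic plane, whose special orthogonal group is a split torus, so
that Hilbert 90 gives the single orbit.
-/

section GroupIndex

variable {A B U : Type*} [CommGroup A] [CommGroup B] [CommGroup U]

theorem index_range_eq_card_ker_mul_relIndex (f : A →* A) (H : Subgroup A) (hH : H.index ≠ 0)
    (hfH : H.map f ≤ H) (hker : H ⊓ f.ker = ⊥) :
    f.range.index = Nat.card f.ker * (H.map f).relIndex H := by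
  have hsup : Nat.card f.ker * (H ⊔ f.ker).index = H.index := by
    rw [← Subgroup.relIndex_mul_index (le_sup_left : H ≤ H ⊔ f.ker), Subgroup.relIndex_sup_left,
      ← Subgroup.inf_relIndex_right, hker, Subgroup.relIndex_bot_left]
  have hmap : (H.map f).relIndex H * H.index = (H ⊔ f.ker).index * f.range.index :=
    (Subgroup.relIndex_mul_index hfH).trans (Subgroup.index_map H f)
  refine Nat.eq_of_mul_eq_mul_left (Nat.pos_of_ne_zero (right_ne_zero_of_mul (hsup ▸ hH))) ?_
  rw [← hmap, ← hsup]
  ring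

theorem range_powMonoidHom_two : (powMonoidHom 2 : A →* A).range = Subgroup.square A := by
  ext a
  simp [isSquare_iff_exists_sq, eq_comm]

theorem index_square_of_exact (ι : U →* A) (φ : A →* B) (hι : Function.Injective ι)
    (hφ : Function.Surjective φ) (hexact : ι.range = φ.ker) (hB : ∀ b : B, b ^ 2 = 1 → b = 1) :
    (Subgroup.square A).index = (Subgroup.square U).index * (Subgroup.square B).index := by
  have hmap : (Subgroup.square A).map φ = Subgroup.square B := by
    ext b
    simp only [Subgroup.mem_map, Subgroup.mem_square]
    refine ⟨fun ⟨a, ha, hab⟩ => hab ▸ ha.map φ, fun ⟨c, hc⟩ => ?_⟩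
    obtain ⟨a, rfl⟩ := hφ c
    exact ⟨a * a, ⟨a, rfl⟩, by rw [map_mul, hc]⟩
  have hinf : Subgroup.square A ⊓ φ.ker = (Subgroup.square U).map ι := by
    ext a
    simp only [Subgroup.mem_inf, Subgroup.mem_square, Subgroup.mem_map]
    constructor
    · rintro ⟨⟨c, rfl⟩, hc⟩
      obtain ⟨u, rfl⟩ : c ∈ ι.range := hexact ▸ hB _ (by rwa [← map_pow, sq])
      exact ⟨u * u, ⟨u, rfl⟩, map_mul ι u u⟩
    · rintro ⟨u, hu, rfl⟩
      exact ⟨hu.map ι, hexact ▸ ⟨u, rfl⟩⟩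
  have hker : φ.ker = (⊤ : Subgroup U).map ι := by rw [← hexact, MonoidHom.range_eq_map]
  rw [← Subgroup.relIndex_mul_index (le_sup_left : Subgroup.square A ≤ _ ⊔ φ.ker),
    Subgroup.relIndex_sup_left, ← Subgroup.inf_relIndex_right, hinf, hker,
    Subgroup.relIndex_map_map_of_injective _ _ hι, Subgroup.relIndex_top_right, ← hker,
    ← hmap, Subgroup.index_map, φ.range_eq_top_of_surjective hφ, Subgroup.index_top, mul_one]

theorem index_square_multiplicative_int : (Subgroup.square (Multiplicative ℤ)).index = 2 := by
  have hsq : Subgroup.square (Multiplicative ℤ) =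
      AddSubgroup.toSubgroup (AddSubgroup.zmultiples (2 : ℤ)) := by
    ext a
    change IsSquare a ↔ a.toAdd ∈ AddSubgroup.zmultiples (2 : ℤ)
    rw [Int.mem_zmultiples_iff, ← even_iff_two_dvd, even_toAdd_iff]
  rw [hsq]
  exact Int.index_zmultiples 2

end GroupIndex

section PrincipalUnits

variable {O : Type*} [CommRing O]

/-- The group of units of `O` congruent to `1` modulo `a`. -/
def principalUnits (a : O) : Subgroup Oˣ :=
  (Units.map (Ideal.Quotient.mk (Ideal.span {a})).toMonoidHom).ker

theorem mem_principalUnits {a : O} {u : Oˣ} : u ∈ principalUnits a ↔ a ∣ u - 1 := by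
  rw [principalUnits, MonoidHom.mem_ker, Units.ext_iff, ← Ideal.mem_span_singleton,
    ← Ideal.Quotient.eq]
  simp

theorem index_principalUnits_ne_zero [Ring.HasFiniteQuotients O] {a : O} (ha : a ≠ 0) :
    (principalUnits a).index ≠ 0 := by
  have : Finite (O ⧸ Ideal.span {a}) :=
    Ring.HasFiniteQuotients.finiteQuotient (mt Ideal.span_singleton_eq_bot.mp ha)
  rw [principalUnits, Subgroup.index_ker]
  exact Nat.card_pos.ne'

theorem principalUnits_le_of_dvd {a b : O} (h : a ∣ b) : principalUnits b ≤ principalUnits a :=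
  fun _ hu => mem_principalUnits.mpr (h.trans (mem_principalUnits.mp hu))

variable [IsDomain O]

/-- The homomorphism `1 + a x ↦ x mod b` on the principal units modulo `a`, for `b ∣ a`. -/
noncomputable def principalUnitsToQuotient {a b : O} (ha : a ≠ 0) (hba : b ∣ a) :
    principalUnits a →* Multiplicative (O ⧸ Ideal.span {b}) :=
  MonoidHom.mk' (fun u => .ofAdd (Ideal.Quotient.mk _ (mem_principalUnits.mp u.2).choose)) <| by
    intro u v
    rw [← ofAdd_add, ← map_add, Equiv.apply_eq_iff_eq, Ideal.Quotient.mk_eq_mk_iff_sub_mem,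
      Ideal.mem_span_singleton]
    generalize_proofs huv hu hv
    have hprod := huv.choose_spec
    push_cast at hprod
    have hcocycle : a * huv.choose = a * (hu.choose + hv.choose + a * hu.choose * hv.choose) := by
      linear_combination hu.choose_spec * (v : Oˣ) + (1 + a * hu.choose) * hv.choose_spec - hprod
    rw [mul_left_cancel₀ ha hcocycle, add_sub_cancel_left, mul_assoc]
    exact hba.mul_right _

theorem principalUnitsToQuotient_eq {a b x : O} (ha : a ≠ 0) (hba : b ∣ a) (u : principalUnits a)
    (hu : ((u : Oˣ) : O) - 1 = a * x) :
    principalUnitsToQuotient ha hba u = .ofAdd (Ideal.Quotient.mk (Ideal.span {b}) x) := by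
  have hchoose := (mem_principalUnits.mp u.2).choose_spec
  rw [principalUnitsToQuotient, MonoidHom.mk'_apply, mul_left_cancel₀ ha (hchoose.symm.trans hu)]

theorem relIndex_principalUnits_mul [IsLocalRing O] {a b : O} (ha : a ≠ 0) (hba : b ∣ a)
    (ham : a ∈ IsLocalRing.maximalIdeal O) :
    (principalUnits (a * b)).relIndex (principalUnits a) = Nat.card (O ⧸ Ideal.span {b}) := by
  have hker : (principalUnitsToQuotient ha hba).ker =
      (principalUnits (a * b)).subgroupOf (principalUnits a) := by
    ext u
    obtain ⟨x, hx⟩ := mem_principalUnits.mp u.2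
    rw [MonoidHom.mem_ker, principalUnitsToQuotient_eq ha hba u hx, ofAdd_eq_one,
      Ideal.Quotient.eq_zero_iff_mem, Ideal.mem_span_singleton, Subgroup.mem_subgroupOf,
      mem_principalUnits, hx, mul_dvd_mul_iff_left ha]
  have hsurj : Function.Surjective (principalUnitsToQuotient ha hba) := by
    intro q
    obtain ⟨x, hx⟩ := Ideal.Quotient.mk_surjective q.toAdd
    obtain ⟨u, hu⟩ : IsUnit (1 + a * x) := by
      simpa using! IsLocalRing.isUnit_one_sub_self_of_mem_nonunits _
        (neg_mem (Ideal.mul_mem_right x _ ham))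
    refine ⟨⟨u, mem_principalUnits.mpr ⟨x, by rw [hu]; ring⟩⟩, ?_⟩
    rw [principalUnitsToQuotient_eq ha hba _ (x := x) (by rw [hu]; ring), hx, ofAdd_toAdd]
  rw [Subgroup.relIndex, ← hker, Subgroup.index_ker, MonoidHom.range_eq_top.mpr hsurj,
    Subgroup.card_top]
  rfl

end PrincipalUnits

section HenselianSquares

variable {O : Type*} [CommRing O]

theorem exists_add_mul_sq_eq [HenselianLocalRing O] {m : O} (hm : m ∈ IsLocalRing.maximalIdeal O)
    (s : O) : ∃ x, x + m * x ^ 2 = s := by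
  -- `x = s / (1 + t)` for the root `t ≡ 0` of `T² + T - m s`.
  obtain ⟨t, ht, htm⟩ := HenselianLocalRing.is_henselian
    (Polynomial.X ^ 2 + Polynomial.X - Polynomial.C (m * s)) (by monicity!) 0
    (by simpa using Ideal.mul_mem_right s _ hm) (by simp)
  have hroot : t ^ 2 + t = m * s := by simpa [Polynomial.IsRoot, sub_eq_zero] using ht
  rw [sub_zero] at htm
  obtain ⟨u, hu⟩ : IsUnit (1 + t) := by
    simpa using! IsLocalRing.isUnit_one_sub_self_of_mem_nonunits _ (neg_mem htm)
  have hinv : (↑u⁻¹ : O) * (1 + t) = 1 := by rw [← hu, Units.inv_mul]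
  refine ⟨↑u⁻¹ * s, ?_⟩
  linear_combination (s + s * t * ↑u⁻¹) * hinv - (↑u⁻¹ : O) ^ 2 * s * hroot

theorem map_square_principalUnits [HenselianLocalRing O] {m : O}
    (hm : m ∈ IsLocalRing.maximalIdeal O) :
    (principalUnits (2 * m)).map (powMonoidHom 2) = principalUnits (2 * m * 2) := by
  ext u
  simp only [Subgroup.mem_map, mem_principalUnits, powMonoidHom_apply]
  constructor
  · rintro ⟨v, ⟨x, hx⟩, rfl⟩
    refine ⟨x + m * x ^ 2, ?_⟩
    push_cast
    linear_combination (↑v + 1 + 2 * m * x) * hx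
  · rintro ⟨s, hs⟩
    obtain ⟨x, hx⟩ := exists_add_mul_sq_eq hm s
    obtain ⟨v, hv⟩ : IsUnit (1 + 2 * m * x) := by
      simpa [mul_comm, mul_left_comm] using! IsLocalRing.isUnit_one_sub_self_of_mem_nonunits _
        (neg_mem (Ideal.mul_mem_right (2 * x) _ hm))
    refine ⟨v, ⟨x, by rw [hv]; ring⟩, Units.ext ?_⟩
    push_cast
    rw [hv]
    linear_combination 4 * m * hx - hs

variable [IsDomain O]

theorem mem_ker_powMonoidHom_two {u : Oˣ} :
    u ∈ (powMonoidHom 2 : Oˣ →* Oˣ).ker ↔ u = 1 ∨ u = -1 := by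
  rw [MonoidHom.mem_ker, powMonoidHom_apply, sq, mul_eq_one_iff_inv_eq, Units.inv_eq_self_iff]

theorem card_ker_powMonoidHom_two (h2 : (2 : O) ≠ 0) :
    Nat.card (powMonoidHom 2 : Oˣ →* Oˣ).ker = 2 := by
  have hker : ((powMonoidHom 2 : Oˣ →* Oˣ).ker : Set Oˣ) = {1, -1} :=
    Set.ext fun _ => mem_ker_powMonoidHom_two
  have hne : (1 : Oˣ) ≠ -1 := fun h => h2 <| by
    linear_combination (by simpa using congrArg Units.val h : (1 : O) = -1)
  rw [← SetLike.coe_sort_coe, Nat.card_coe_set_eq, hker, Set.ncard_pair hne]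

theorem principalUnits_inf_ker {m : O} (h2 : (2 : O) ≠ 0) (hm : ¬ IsUnit m) :
    principalUnits (2 * m) ⊓ (powMonoidHom 2 : Oˣ →* Oˣ).ker = ⊥ := by
  refine eq_bot_iff.mpr fun u ⟨hu, hsq⟩ => ?_
  obtain ⟨x, hx⟩ := mem_principalUnits.mp hu
  rcases mem_ker_powMonoidHom_two.mp hsq with rfl | rfl
  · exact Subgroup.one_mem _
  · refine absurd (IsUnit.of_mul_eq_one (-x) (mul_left_cancel₀ h2 ?_)) hm
    push_cast at hx
    linear_combination hx

theorem even_eq_span_two (O : Type*) [CommRing O] :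
    AddSubgroup.even O = (Ideal.span {(2 : O)}).toAddSubgroup := by
  ext x
  change Even x ↔ x ∈ Ideal.span {(2 : O)}
  rw [Ideal.mem_span_singleton, even_iff_two_dvd]

theorem index_square_units [HenselianLocalRing O] [Ring.HasFiniteQuotients O]
    (hO : ¬ IsField O) (h2 : (2 : O) ≠ 0) :
    (Subgroup.square Oˣ).index = 2 * (AddSubgroup.even O).index := by
  obtain ⟨m, hm, hm0⟩ := Submodule.exists_mem_ne_zero_of_ne_bot
    (mt IsLocalRing.isField_iff_maximalIdeal_eq.mpr hO)
  have ha : 2 * m ≠ 0 := mul_ne_zero h2 hm0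
  -- Squaring maps `1 + 2mO` isomorphically onto `1 + 4mO`.
  rw [← range_powMonoidHom_two, index_range_eq_card_ker_mul_relIndex _ (principalUnits (2 * m))
    (index_principalUnits_ne_zero ha) ?_ (principalUnits_inf_ker h2 hm),
    card_ker_powMonoidHom_two h2, map_square_principalUnits hm,
    relIndex_principalUnits_mul ha (dvd_mul_right 2 m) (Ideal.mul_mem_left _ 2 hm),
    even_eq_span_two]
  · rfl
  · exact (map_square_principalUnits hm).trans_le (principalUnits_le_of_dvd (dvd_mul_right _ _))

theorem index_square_units_fractionField [IsDiscreteValuationRing O] (K : Type*) [Field K]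
    [Algebra O K] [IsFractionRing O K] :
    (Subgroup.square Kˣ).index = (Subgroup.square Oˣ).index * 2 := by
  let v := IsDiscreteValuationRing.maximalIdeal O
  rw [index_square_of_exact (Units.map (algebraMap O K).toMonoidHom) (v.valuationOfNeZero (K := K))
    (Units.map_injective (IsFractionRing.injective O K)) ?_ ?_ ?_, index_square_multiplicative_int]
  · intro z
    obtain ⟨π, hπ⟩ := v.valuation_exists_uniformizer K
    have hπ0 : π ≠ 0 := fun h => by
      rw [h, map_zero] at hπ
      exact WithZero.coe_ne_zero hπ.symm
    refine ⟨Units.mk0 π hπ0 ^ (-z.toAdd), ?_⟩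
    have hv : v.valuationOfNeZero (Units.mk0 π hπ0) = .ofAdd (-1) := by
      rw [← WithZero.coe_inj, v.valuationOfNeZero_eq, Units.val_mk0, hπ]
      rfl
    rw [map_zpow, hv, ← ofAdd_zsmul]
    simp
  · ext x
    have hx : x ∈ (v.valuationOfNeZero (K := K)).ker ↔
        (x : K) ∈ MonoidHom.mker (v.valuation K) := by
      rw [MonoidHom.mem_ker, MonoidHom.mem_mker, ← WithZero.coe_inj, v.valuationOfNeZero_eq,
        WithZero.coe_one]
    rw [hx, IsDiscreteValuationRing.mker_valuation_eq_isUnitSubmonoid]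
    constructor
    · rintro ⟨u, rfl⟩
      exact ⟨u, u.isUnit, rfl⟩
    · rintro ⟨_, ⟨u, rfl⟩, hu⟩
      exact ⟨u, Units.ext hu⟩
  · intro z hz
    have htwo : 2 • z.toAdd = 0 := congrArg Multiplicative.toAdd hz
    exact (smul_eq_zero.mp htwo).resolve_left two_ne_zero

end HenselianSquares

section EvenIndex

variable {A B : Type*} [AddCommGroup A] [AddCommGroup B]

theorem index_even_congr (e : A ≃+ B) :
    (AddSubgroup.even A).index = (AddSubgroup.even B).index := by
  have hmap : (AddSubgroup.even A).map (e : A →+ B) = AddSubgroup.even B := by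
    ext b
    simp only [AddSubgroup.mem_map, AddSubgroup.mem_even]
    exact ⟨fun ⟨a, ha, hab⟩ => hab ▸ ha.map e, fun hb => ⟨e.symm b, hb.map e.symm, by simp⟩⟩
  rw [← hmap, AddSubgroup.index_map_equiv]

theorem index_even_pi (ι : Type*) [Fintype ι] :
    (AddSubgroup.even (ι → A)).index = (AddSubgroup.even A).index ^ Fintype.card ι := by
  have hpi : AddSubgroup.even (ι → A) = AddSubgroup.pi Set.univ fun _ => AddSubgroup.even A := by
    ext f
    simp only [AddSubgroup.mem_even, AddSubgroup.mem_pi, Set.mem_univ, true_implies]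
    refine ⟨fun ⟨g, hg⟩ i => ⟨g i, congrFun hg i⟩, fun h => ?_⟩
    choose g hg using h
    exact ⟨g, funext hg⟩
  rw [hpi, AddSubgroup.index_pi, Finset.prod_const, Finset.card_univ]

theorem index_even_of_free (R M : Type*) [CommRing R] [StrongRankCondition R] [AddCommGroup M]
    [Module R M] [Module.Free R M] [Module.Finite R M] :
    (AddSubgroup.even M).index = (AddSubgroup.even R).index ^ Module.finrank R M := by
  rw [index_even_congr (Module.finBasis R M).equivFun.toAddEquiv, index_even_pi, Fintype.card_fin]

end EvenIndex

section CompactRing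

variable (R : Type*) [CommRing R] [TopologicalSpace R] [IsTopologicalRing R] [CompactSpace R]
  [T2Space R]

theorem isPrecomplete_maximalIdeal_of_compactSpace [IsLocalRing R] [IsNoetherianRing R] :
    IsPrecomplete (IsLocalRing.maximalIdeal R) R where
  prec' f hf := by
    let coset (n : ℕ) : Set R := (fun x => x - f n) ⁻¹' (IsLocalRing.maximalIdeal R ^ n : Ideal R)
    have hclosed (n : ℕ) : IsClosed (coset n) :=
      (IsNoetherianRing.isClosed_ideal _).preimage (continuous_id.sub continuous_const)
    have hanti (n : ℕ) : coset (n + 1) ⊆ coset n := fun x hx => by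
      have hstep : f n - f (n + 1) ∈ IsLocalRing.maximalIdeal R ^ n := by
        simpa [SModEq.sub_mem] using hf n.le_succ
      simpa [coset] using sub_mem (Ideal.pow_le_pow_right n.le_succ hx) hstep
    obtain ⟨x, hx⟩ := (hclosed 0).isCompact.nonempty_iInter_of_sequence_nonempty_isCompact_isClosed
      coset hanti (fun n => ⟨f n, by simp [coset]⟩) hclosed
    refine ⟨x, fun n => (SModEq.sub_mem.mpr ?_).symm⟩
    rw [smul_eq_mul, Ideal.mul_top]
    exact Set.mem_iInter.mp hx n

theorem henselianLocalRing_of_compactSpace [IsLocalRing R] [IsNoetherianRing R] :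
    HenselianLocalRing R where
  is_henselian f hf a₀ h₀ h₁ :=
    have := isPrecomplete_maximalIdeal_of_compactSpace R
    have : IsAdicComplete (IsLocalRing.maximalIdeal R) R := {}
    HenselianRing.is_henselian f hf a₀ h₀ (h₁.map _)

theorem hasFiniteQuotients_of_compactSpace [IsDedekindDomain R] : Ring.HasFiniteQuotients R where
  finiteQuotient hI :=
    AddSubgroup.quotient_finite_of_isOpen _ (IsDedekindDomain.isOpen_of_ne_bot hI)

end CompactRing

section LocalField

open scoped Valued NormedField

theorem compactSpace_integer (K : Type*) [NontriviallyNormedField K] [IsUltrametricDist K]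
    [ProperSpace K] : CompactSpace 𝒪[K] := by
  have hball : (𝒪[K] : Set K) = Metric.closedBall 0 1 := by
    ext x
    simp [Valued.integer.mem_iff]
  exact isCompact_iff_compactSpace.mp (hball ▸ isCompact_closedBall 0 1)

theorem isDiscreteValuationRing_integer (K : Type*) [NontriviallyNormedField K]
    [IsUltrametricDist K] [ProperSpace K] : IsDiscreteValuationRing 𝒪[K] := by
  have := compactSpace_integer K
  have : (Valued.v : Valuation K NNReal).IsNontrivial := by
    obtain ⟨x, hx0, hx1⟩ := Valued.integer.exists_norm_coe_lt_one K
    refine (Valuation.isNontrivial_iff_exists_lt_one _).mpr ⟨x, norm_pos_iff.mp hx0, ?_⟩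
    exact hx1
  exact Valued.integer.isDiscreteValuationRing_of_compactSpace

theorem index_square_units_of_properSpace (K : Type*) [NontriviallyNormedField K]
    [IsUltrametricDist K] [ProperSpace K] (h2 : (2 : K) ≠ 0) :
    (Subgroup.square Kˣ).index = 4 * (AddSubgroup.even 𝒪[K]).index := by
  have := compactSpace_integer K
  have := isDiscreteValuationRing_integer K
  have := henselianLocalRing_of_compactSpace 𝒪[K]
  have := hasFiniteQuotients_of_compactSpace 𝒪[K]
  have h2' : (2 : 𝒪[K]) ≠ 0 := fun h => h2 (congrArg Subtype.val h)
  have hfield := IsDiscreteValuationRing.not_isField 𝒪[K]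
  rw [index_square_units_fractionField (O := 𝒪[K]) K, index_square_units hfield h2']
  ring

variable (p : ℕ) [Fact p.Prime]

theorem index_even_padicInt_ne_zero : (AddSubgroup.even ℤ_[p]).index ≠ 0 := by
  have := hasFiniteQuotients_of_compactSpace ℤ_[p]
  have : Finite (ℤ_[p] ⧸ Ideal.span {(2 : ℤ_[p])}) :=
    Ring.HasFiniteQuotients.finiteQuotient (mt Ideal.span_singleton_eq_bot.mp two_ne_zero)
  rw [even_eq_span_two]
  exact (Nat.card_pos (α := ℤ_[p] ⧸ Ideal.span {(2 : ℤ_[p])})).ne'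

variable (L : Type*) [Field L] [Algebra ℚ_[p] L] [FiniteDimensional ℚ_[p] L]

theorem isIntegral_padicInt_iff_spectralNorm_le_one [Algebra ℤ_[p] L]
    [IsScalarTower ℤ_[p] ℚ_[p] L] (x : L) :
    IsIntegral ℤ_[p] x ↔ spectralNorm ℚ_[p] L x ≤ 1 := by
  have hx : IsIntegral ℚ_[p] x := Algebra.IsIntegral.isIntegral x
  rw [spectralNorm, spectralValue_le_one_iff (minpoly.monic hx)]
  constructor
  · intro h n
    rw [minpoly.isIntegrallyClosed_eq_field_fractions' ℚ_[p] h, Polynomial.coeff_map]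
    exact PadicInt.norm_le_one _
  · intro h
    have hlifts : minpoly ℚ_[p] x ∈ Polynomial.lifts (algebraMap ℤ_[p] ℚ_[p]) :=
      (Polynomial.lifts_iff_coeff_lifts _).mpr fun n => ⟨⟨_, h n⟩, rfl⟩
    obtain ⟨q, hq, -, hmonic⟩ := Polynomial.lifts_and_degree_eq_and_monic hlifts (minpoly.monic hx)
    refine ⟨q, hmonic, ?_⟩
    rw [IsScalarTower.algebraMap_eq ℤ_[p] ℚ_[p] L, ← Polynomial.eval₂_map, hq]
    exact minpoly.aeval _ _

theorem index_square_units_of_finiteDimensional_padic :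
    (Subgroup.square Lˣ).index = 4 * (AddSubgroup.even ℤ_[p]).index ^ Module.finrank ℚ_[p] L := by
  let := spectralNorm.nontriviallyNormedField ℚ_[p] L
  let := spectralNorm.normedAlgebra ℚ_[p] L
  have : IsUltrametricDist L := IsUltrametricDist.isUltrametricDist_of_isNonarchimedean_norm
    (isNonarchimedean_spectralNorm (K := ℚ_[p]))
  have := FiniteDimensional.proper ℚ_[p] L
  have : CharZero L := charZero_of_injective_algebraMap (algebraMap ℚ_[p] L).injective
  let : Algebra ℤ_[p] L := Algebra.compHom L (algebraMap ℤ_[p] ℚ_[p])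
  have : IsScalarTower ℤ_[p] ℚ_[p] L := IsScalarTower.of_algebraMap_eq fun _ => rfl
  have : Module.IsTorsionFree ℤ_[p] L := .trans_faithfulSMul ℤ_[p] ℚ_[p] L
  let e : 𝒪[L] ≃+ integralClosure ℤ_[p] L :=
    { Equiv.subtypeEquivRight fun x => (Valued.integer.mem_iff).trans
        (isIntegral_padicInt_iff_spectralNorm_le_one p L x).symm with
      map_add' := fun _ _ => rfl }
  have := IsIntegralClosure.module_free ℤ_[p] ℚ_[p] L (integralClosure ℤ_[p] L)
  have := IsIntegralClosure.finite ℤ_[p] ℚ_[p] L (integralClosure ℤ_[p] L)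
  rw [index_square_units_of_properSpace L two_ne_zero, index_even_congr e,
    index_even_of_free ℤ_[p], IsIntegralClosure.rank ℤ_[p] ℚ_[p] L]

end LocalField

section NormSubgroup

/-- The group of units of `R` that are norms from `R[√a]`, that is, of the form `x² - a y²`. -/
def normSubgroup {R : Type*} [CommRing R] (a : R) : Subgroup Rˣ :=
  (Units.map (QuadraticAlgebra.norm (R := R) (a := a) (b := 0))).range

theorem mem_normSubgroup {R : Type*} [CommRing R] {a : R} {c : Rˣ} :
    c ∈ normSubgroup a ↔ ∃ x y : R, x ^ 2 - a * y ^ 2 = c := by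
  have hnorm (z : QuadraticAlgebra R a 0) : z.norm = z.re ^ 2 - a * z.im ^ 2 := by
    rw [QuadraticAlgebra.norm_def]
    ring
  constructor
  · rintro ⟨z, rfl⟩
    exact ⟨_, _, (hnorm z).symm⟩
  · rintro ⟨x, y, hxy⟩
    have hz : (⟨x, y⟩ : QuadraticAlgebra R a 0).norm = c := (hnorm _).trans hxy
    obtain ⟨z, hzu⟩ := QuadraticAlgebra.isUnit_iff_norm_isUnit.mpr (hz ▸ c.isUnit)
    exact ⟨z, Units.ext ((congrArg _ hzu).trans hz)⟩

variable {F : Type*} [Field F]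

theorem isSquare_units_val_iff {u : Fˣ} : IsSquare (u : F) ↔ IsSquare u := by
  refine ⟨fun ⟨r, hr⟩ => ?_, fun h => h.map (Units.coeHom F)⟩
  have hr0 : r ≠ 0 := left_ne_zero_of_mul (hr ▸ u.ne_zero)
  exact ⟨Units.mk0 r hr0, Units.ext hr⟩

theorem square_le_normSubgroup (a : F) : Subgroup.square Fˣ ≤ normSubgroup a := by
  rintro _ ⟨c, rfl⟩
  exact mem_normSubgroup.mpr ⟨c, 0, by push_cast; ring⟩

variable [NeZero (2 : F)]

theorem normSubgroup_eq_top_of_isSquare {a : F} (ha0 : a ≠ 0) (ha : IsSquare a) :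
    normSubgroup a = ⊤ := by
  obtain ⟨s, rfl⟩ := ha
  have hs : s ≠ 0 := left_ne_zero_of_mul ha0
  have h2 : (2 : F) ≠ 0 := two_ne_zero
  refine eq_top_iff.mpr fun c _ => mem_normSubgroup.mpr ⟨(c + 1) / 2, (c - 1) / (2 * s), ?_⟩
  field_simp
  ring

theorem mem_normSubgroup_comm {a b : Fˣ} :
    b ∈ normSubgroup (a : F) ↔ a ∈ normSubgroup (b : F) := by
  suffices ∀ a b : Fˣ, b ∈ normSubgroup (a : F) → a ∈ normSubgroup (b : F) from
    ⟨this a b, this b a⟩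
  intro a b h
  obtain ⟨x, y, hxy⟩ := mem_normSubgroup.mp h
  rcases eq_or_ne y 0 with rfl | hy
  · rw [normSubgroup_eq_top_of_isSquare b.ne_zero ⟨x, by rw [← hxy]; ring⟩]
    exact Subgroup.mem_top a
  · refine mem_normSubgroup.mpr ⟨x / y, 1 / y, ?_⟩
    field_simp
    linear_combination hxy

variable {δ : F}

local notation "K" => QuadraticAlgebra F δ 0

theorem isSquare_algebraMap_quadraticAlgebra_iff (hδ : δ ≠ 0) {b : F} :
    IsSquare (algebraMap F K b) ↔ IsSquare b ∨ IsSquare (b * δ) := by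
  constructor
  · rintro ⟨z, hz⟩
    have hre : b = z.re * z.re + δ * z.im * z.im := congrArg QuadraticAlgebra.re hz
    have him : 0 = z.re * z.im + z.im * z.re + 0 * z.im * z.im := congrArg QuadraticAlgebra.im hz
    have hprod : z.re * z.im = 0 :=
      (mul_eq_zero.mp (by linear_combination -him : 2 * (z.re * z.im) = 0)).resolve_left two_ne_zero
    rcases mul_eq_zero.mp hprod with h | h
    · exact .inr ⟨δ * z.im, by rw [hre, h]; ring⟩
    · exact .inl ⟨z.re, by rw [hre, h]; ring⟩
  · rintro (h | ⟨s, hs⟩)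
    · exact h.map _
    · refine ⟨⟨0, s / δ⟩, QuadraticAlgebra.ext ?_ ?_⟩
      · simp only [QuadraticAlgebra.algebraMap_re, QuadraticAlgebra.re_mul]
        field_simp
        linear_combination hs
      · simp

variable [Fact (∀ r : F, r ^ 2 ≠ δ + 0 * r)]

theorem exists_sq_eq_mul_algebraMap {z : Kˣ} (hz : IsSquare (z : K).norm) :
    ∃ (w : Kˣ) (r : Fˣ), w ^ 2 = z * Units.map (algebraMap F K : F →* K) r := by
  obtain ⟨a, ha, har⟩ : ∃ a, (z : K).norm = a ^ 2 ∧ 2 * ((z : K).re + a) ≠ 0 := by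
    obtain ⟨a, ha⟩ := hz
    have ha0 : a ≠ 0 :=
      left_ne_zero_of_mul (ha ▸ QuadraticAlgebra.norm_eq_zero_iff_eq_zero.not.mpr z.ne_zero)
    by_cases hr : (z : K).re + a = 0
    · refine ⟨-a, by rw [ha]; ring, mul_ne_zero two_ne_zero fun h => ha0 ?_⟩
      exact (mul_eq_zero.mp (by linear_combination hr - h : 2 * a = 0)).resolve_left two_ne_zero
    · exact ⟨a, by rw [ha]; ring, mul_ne_zero two_ne_zero hr⟩
  -- `z z̄ = a²` gives `(a + z)² = z (z̄ + 2a + z)`, and `z + z̄ + 2a` lies in `F`.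
  have hsq : (algebraMap F K a + z) ^ 2 = z * algebraMap F K (2 * ((z : K).re + a)) := by
    rw [QuadraticAlgebra.norm_def] at ha
    ext
    · simp only [sq, QuadraticAlgebra.re_mul, QuadraticAlgebra.re_add, QuadraticAlgebra.im_add,
        QuadraticAlgebra.algebraMap_re, QuadraticAlgebra.algebraMap_im]
      linear_combination -ha
    · simp only [sq, QuadraticAlgebra.im_mul, QuadraticAlgebra.re_add, QuadraticAlgebra.im_add,
        QuadraticAlgebra.algebraMap_re, QuadraticAlgebra.algebraMap_im]
      ring
  have hw : algebraMap F K a + z ≠ 0 := by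
    refine fun h => mul_ne_zero z.ne_zero ((map_ne_zero (algebraMap F K)).mpr har) ?_
    rw [← hsq, h, zero_pow two_ne_zero]
  exact ⟨.mk0 _ hw, .mk0 _ har, Units.ext hsq⟩

theorem comap_norm_square_eq :
    (Subgroup.square Fˣ).comap (Units.map (QuadraticAlgebra.norm : K →* F)) =
      Subgroup.square Kˣ ⊔ (Units.map (algebraMap F K : F →* K)).range := by
  refine le_antisymm (fun z hz => ?_) (sup_le (fun z hz => IsSquare.map _ hz) ?_)
  · obtain ⟨w, r, hw⟩ := exists_sq_eq_mul_algebraMap (isSquare_units_val_iff.mpr hz)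
    rw [eq_mul_inv_of_mul_eq hw.symm]
    exact Subgroup.mul_mem_sup (IsSquare.sq w) (inv_mem ⟨r, rfl⟩)
  · rintro _ ⟨r, rfl⟩
    exact isSquare_iff_exists_sq _ |>.mpr ⟨r, Units.ext (QuadraticAlgebra.norm_algebraMap _)⟩

theorem relIndex_square_comap_algebraMap :
    (Subgroup.square Fˣ).relIndex
      ((Subgroup.square Kˣ).comap (Units.map (algebraMap F K : F →* K))) = 2 := by
  have hδ : ¬ IsSquare δ := fun ⟨r, hr⟩ =>
    Fact.out (p := ∀ r : F, r ^ 2 ≠ δ + 0 * r) r (by linear_combination -hr)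
  have hδ0 : δ ≠ 0 := fun h => hδ (h ▸ .zero)
  have hcomap (b : Fˣ) : b ∈ (Subgroup.square Kˣ).comap (Units.map (algebraMap F K : F →* K)) ↔
      IsSquare (b : F) ∨ IsSquare (b * δ) := by
    rw [← isSquare_algebraMap_quadraticAlgebra_iff hδ0]
    exact isSquare_units_val_iff.symm
  refine Subgroup.relIndex_eq_two_iff_exists_notMem_and.mpr ⟨.mk0 δ hδ0, ?_, ?_, fun b hb => ?_⟩
  · exact (hcomap _).mpr (.inr ⟨δ, rfl⟩)
  · exact fun h => hδ (isSquare_units_val_iff.mpr h)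
  · rw [Subgroup.mem_square, Subgroup.mem_square, ← isSquare_units_val_iff,
      ← isSquare_units_val_iff]
    exact ((hcomap b).mp hb).symm

theorem index_square_quadraticAlgebra_mul_index_normSubgroup :
    (Subgroup.square Kˣ).index * (2 * (normSubgroup δ).index) = (Subgroup.square Fˣ).index ^ 2 := by
  have hK : (Subgroup.square Kˣ).index =
      ((Subgroup.square Kˣ).comap (Units.map (algebraMap F K : F →* K))).index *
        (Subgroup.square Fˣ).relIndex (normSubgroup δ) := by
    rw [← Subgroup.relIndex_mul_index (le_sup_left : Subgroup.square Kˣ ≤ _ ⊔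
        (Units.map (algebraMap F K : F →* K)).range),
      Subgroup.relIndex_sup_left, ← comap_norm_square_eq, Subgroup.index_comap,
      Subgroup.index_comap, normSubgroup]
  have hle : Subgroup.square Fˣ ≤
      (Subgroup.square Kˣ).comap (Units.map (algebraMap F K : F →* K)) :=
    fun _ h => IsSquare.map _ h
  have hcomap := Subgroup.relIndex_mul_index hle
  have hnorm := Subgroup.relIndex_mul_index (square_le_normSubgroup δ)
  rw [relIndex_square_comap_algebraMap] at hcomap
  rw [hK, sq]
  nth_rw 1 [← hcomap]
  rw [← hnorm]
  ring

end NormSubgroup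

section PadicNormSubgroup

theorem index_normSubgroup_eq_two (p : ℕ) [Fact p.Prime] {F : Type*} [Field F] [Algebra ℚ_[p] F]
    [FiniteDimensional ℚ_[p] F] {δ : F} (hδ : ¬ IsSquare δ) : (normSubgroup δ).index = 2 := by
  have : Fact (∀ r : F, r ^ 2 ≠ δ + 0 * r) := ⟨fun r h => hδ ⟨r, by linear_combination -h⟩⟩
  have : CharZero F := charZero_of_injective_algebraMap (algebraMap ℚ_[p] F).injective
  have : FiniteDimensional ℚ_[p] (QuadraticAlgebra F δ 0) := .trans ℚ_[p] F _
  have hindex := index_square_quadraticAlgebra_mul_index_normSubgroup (δ := δ)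
  rw [index_square_units_of_finiteDimensional_padic p,
    index_square_units_of_finiteDimensional_padic p,
    ← Module.finrank_mul_finrank ℚ_[p] F (QuadraticAlgebra F δ 0),
    QuadraticAlgebra.finrank_eq_two, pow_mul] at hindex
  have hpos : 0 < ((AddSubgroup.even ℤ_[p]).index ^ Module.finrank ℚ_[p] F) ^ 2 :=
    pow_pos (pow_pos (Nat.pos_of_ne_zero (index_even_padicInt_ne_zero p)) _) 2
  exact Nat.eq_of_mul_eq_mul_left hpos (by linarith)

theorem exists_mem_normSubgroup_mul_notMem (p : ℕ) [Fact p.Prime] {F : Type*} [Field F]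
    [Algebra ℚ_[p] F] [FiniteDimensional ℚ_[p] F] {e δ : F} (he : ¬ IsSquare e)
    (hδ : ¬ IsSquare δ) : ∃ c ∈ normSubgroup (e * δ), c ∉ normSubgroup δ := by
  have : CharZero F := charZero_of_injective_algebraMap (algebraMap ℚ_[p] F).injective
  lift e to Fˣ using .mk0 e fun h => he (h ▸ .zero)
  lift δ to Fˣ using .mk0 δ fun h => hδ (h ▸ .zero)
  by_contra! hle
  have hcompl (c : Fˣ) (hc : c ∉ normSubgroup (δ : F)) : c ∈ normSubgroup (e : F) := by
    have hcsq : ¬ IsSquare (c : F) :=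
      fun h => hc (square_le_normSubgroup _ (isSquare_units_val_iff.mp h))
    have heδ : e * δ ∉ normSubgroup (c : F) :=
      fun h => hc (hle c (by simpa using mem_normSubgroup_comm.mp h))
    rw [Subgroup.mul_mem_iff_of_index_two (index_normSubgroup_eq_two p hcsq),
      mem_normSubgroup_comm (b := δ)] at heδ
    exact mem_normSubgroup_comm.mp (by tauto)
  obtain ⟨d, hd⟩ : ∃ d, d ∉ normSubgroup (δ : F) := by
    by_contra! h
    simpa [(Subgroup.eq_top_iff' _).mpr h] using index_normSubgroup_eq_two p hδ
  have htop : normSubgroup (e : F) = ⊤ := by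
    refine (Subgroup.eq_top_iff' _).mpr fun c => ?_
    by_cases hc : c ∈ normSubgroup (δ : F)
    · exact (Subgroup.mul_mem_cancel_right _ (hcompl d hd)).mp
        (hcompl _ (mt (Subgroup.mul_mem_cancel_left _ hc).mp hd))
    · exact hcompl c hc
  simpa [htop] using index_normSubgroup_eq_two p he

end PadicNormSubgroup

section Witt

variable {F V : Type*} [Field F] [NeZero (2 : F)] [AddCommGroup V] [Module F V]
  {B : V →ₗ[F] V →ₗ[F] F}

theorem exists_isOrthogonal_reflection (hB : B.IsSymm) {z : V} (hz : B z z ≠ 0) :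
    ∃ T : V →ₗ[F] V, B.IsOrthogonal T ∧ ∀ x, T x = x - (2 * B z x / B z z) • z := by
  have hrefl : B.IsReflective z := .of_dvd_two B (dvd_of_mul_left_eq (2 / B z z) (by field_simp))
  refine ⟨(Module.reflection (hrefl.coroot_apply_self B)).toLinearMap,
    hrefl.isOrthogonal_reflection B hB, fun x => ?_⟩
  rw [LinearEquiv.coe_coe, Module.reflection_apply, ← hrefl.apply_self_mul_coroot_apply B,
    mul_div_cancel_left₀ _ hz]

theorem exists_isOrthogonal_apply_eq_of_sub (hB : B.IsSymm) {u v : V} (huv : B u u = B v v)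
    (h : B (u - v) (u - v) ≠ 0) :
    ∃ T : V →ₗ[F] V, B.IsOrthogonal T ∧ T u = v ∧ ∀ x, B u x = 0 → B v x = 0 → T x = x := by
  obtain ⟨T, hT, hTx⟩ := exists_isOrthogonal_reflection hB h
  refine ⟨T, hT, ?_, fun x hux hvx => ?_⟩
  · have hcoeff : 2 * B (u - v) u / B (u - v) (u - v) = 1 := by
      have hvu : B v u = B u v := (hB.eq u v).symm
      rw [div_eq_one_iff_eq h]
      simp only [map_sub, LinearMap.sub_apply, hvu, ← huv]
      ring
    rw [hTx, hcoeff, one_smul, sub_sub_cancel]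
  · rw [hTx, map_sub, LinearMap.sub_apply, hux, hvx, sub_zero, mul_zero, zero_div, zero_smul,
      sub_zero]

theorem exists_isOrthogonal_apply_eq (hB : B.IsSymm) {u v : V} (huv : B u u = B v v)
    (hv : B v v ≠ 0) :
    ∃ T : V →ₗ[F] V, B.IsOrthogonal T ∧ T u = v ∧ ∀ x, B u x = 0 → B v x = 0 → T x = x := by
  have h2 : (2 : F) ≠ 0 := two_ne_zero
  by_cases h : B (u - v) (u - v) = 0
  -- When `u - v` is isotropic, `u + v` is not: reflect `u` to `-v`, then `-v` to `v`.
  · have hadd : B (u - -v) (u - -v) ≠ 0 := by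
      have hparallelogram : B (u - -v) (u - -v) + B (u - v) (u - v) = 2 * (2 * B v v) := by
        simp only [map_sub, map_neg, LinearMap.sub_apply, LinearMap.neg_apply, huv]
        ring
      rw [h, add_zero] at hparallelogram
      exact hparallelogram ▸ mul_ne_zero h2 (mul_ne_zero h2 hv)
    have hneg : B (-v - v) (-v - v) ≠ 0 := by
      have hfour : B (-v - v) (-v - v) = 2 * (2 * B v v) := by
        simp only [map_sub, map_neg, LinearMap.sub_apply, LinearMap.neg_apply]
        ring
      exact hfour ▸ mul_ne_zero h2 (mul_ne_zero h2 hv)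
    obtain ⟨S, hS, hSu, hSfix⟩ := exists_isOrthogonal_apply_eq_of_sub hB (by simpa using huv) hadd
    obtain ⟨R, hR, hRv, hRfix⟩ := exists_isOrthogonal_apply_eq_of_sub hB (by simp) hneg
    refine ⟨R ∘ₗ S, fun x y => (hR _ _).trans (hS x y), by simp [hSu, hRv], fun x hux hvx => ?_⟩
    rw [LinearMap.comp_apply, hSfix x hux (by simpa using hvx), hRfix x (by simpa using hvx) hvx]
  · exact exists_isOrthogonal_apply_eq_of_sub hB huv h

theorem exists_isOrthogonal_forall_mem_apply_eq (hB : B.IsSymm) {ι : Type*} {u v : ι → V}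
    (huv : ∀ a b, B (u a) (u b) = B (v a) (v b)) (hortho : B.IsOrthoᵢ v)
    (hv : ∀ a, B (v a) (v a) ≠ 0) (S : Finset ι) :
    ∃ T : V →ₗ[F] V, B.IsOrthogonal T ∧ ∀ a ∈ S, T (u a) = v a := by
  classical
  induction S using Finset.induction_on with
  | empty => exact ⟨.id, fun _ _ => rfl, by simp⟩
  | insert a S ha ih =>
    obtain ⟨T, hT, hTS⟩ := ih
    obtain ⟨R, hR, hRa, hRfix⟩ := exists_isOrthogonal_apply_eq hB
      ((hT (u a) (u a)).trans (huv a a)) (hv a)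
    refine ⟨R ∘ₗ T, fun x y => (hR _ _).trans (hT x y), fun b hb => ?_⟩
    rcases Finset.mem_insert.mp hb with rfl | hbS
    · exact hRa
    · have hab : B (v a) (v b) = 0 := hortho (ne_of_mem_of_not_mem hbS ha).symm
      rw [LinearMap.comp_apply, hTS b hbS]
      refine hRfix _ ?_ hab
      rw [← hTS b hbS, hT, huv, hab]

end Witt

section WittMatrix

variable {F m κ : Type*} [Field F] [Fintype m]

theorem isSymm_toLinearMap₂'_of_transpose_eq [DecidableEq m] {M : Matrix m m F} (hM : Mᵀ = M) :
    (toLinearMap₂' F M).IsSymm :=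
  ⟨fun x y => by
    rw [RingHom.id_apply, toLinearMap₂'_apply', toLinearMap₂'_apply', dotProduct_mulVec,
      ← mulVec_transpose, hM, dotProduct_comm]⟩

theorem toLinearMap₂'_col_apply [DecidableEq m] (M : Matrix m m F) (A : Matrix m κ F) (a b : κ) :
    toLinearMap₂' F M (A.col a) (A.col b) = (Aᵀ * M * A) a b := by
  rw [toLinearMap₂'_apply', Matrix.mul_assoc]
  rfl

variable [NeZero (2 : F)] [DecidableEq κ]

theorem exists_transpose_mul_mul_eq_and_mul_eq [Finite κ] {M : Matrix m m F} {U W : Matrix m κ F}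
    {w : κ → F} (hM : Mᵀ = M) (hw : ∀ k, w k ≠ 0) (hU : Uᵀ * M * U = diagonal w)
    (hW : Wᵀ * M * W = diagonal w) : ∃ T : Matrix m m F, Tᵀ * M * T = M ∧ T * U = W := by
  classical
  have := Fintype.ofFinite κ
  have hcol := toLinearMap₂'_col_apply (κ := κ) M
  obtain ⟨T, hT, hTU⟩ := exists_isOrthogonal_forall_mem_apply_eq
    (isSymm_toLinearMap₂'_of_transpose_eq hM) (u := U.col) (v := W.col)
    (fun a b => by rw [hcol, hcol, hU, hW])
    (fun a b hab => (hcol W a b).trans (hW ▸ diagonal_apply_ne _ hab))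
    (fun a => by rw [hcol, hW, diagonal_apply_eq]; exact hw a) Finset.univ
  refine ⟨LinearMap.toMatrix' T, ?_, ?_⟩
  · have hcomp : (toLinearMap₂' F M).compl₁₂ T T = toLinearMap₂' F M := LinearMap.ext₂ hT
    have hmatrix := congrArg (LinearMap.toMatrix₂' F) hcomp
    rwa [LinearMap.toMatrix₂'_compl₁₂, LinearMap.toMatrix'_toLinearMap₂'] at hmatrix
  · ext a k
    have := congrFun (hTU k (Finset.mem_univ k)) a
    rwa [← toLin'_toMatrix' T] at this

theorem exists_transpose_mul_mul_eq_of_fromBlocks [Fintype κ] {A A' : Matrix m m F} {w : κ → F}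
    (hA : Aᵀ = A) (hw : ∀ k, w k ≠ 0) {f : Matrix (m ⊕ κ) (m ⊕ κ) F}
    (hf : fᵀ * fromBlocks A 0 0 (diagonal w) * f = fromBlocks A' 0 0 (diagonal w)) :
    ∃ h : Matrix m m F, hᵀ * A * h = A' := by
  set M : Matrix (m ⊕ κ) (m ⊕ κ) F := fromBlocks A 0 0 (diagonal w) with hMdef
  have hM : Mᵀ = M := by rw [hMdef, fromBlocks_transpose, hA]; simp
  set J : Matrix (m ⊕ κ) κ F := fromRows 0 1 with hJdef
  have hJ (N : Matrix (m ⊕ κ) (m ⊕ κ) F) : N * J = fromRows N.toBlocks₁₂ N.toBlocks₂₂ := by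
    rw [hJdef, ← fromBlocks_toBlocks N, fromBlocks_mul_fromRows]
    simp
  have hJt (N : Matrix (m ⊕ κ) (m ⊕ κ) F) : Jᵀ * N * J = N.toBlocks₂₂ := by
    rw [Matrix.mul_assoc, hJ, hJdef, transpose_fromRows, fromCols_mul_fromRows]
    simp
  obtain ⟨T, hT, hTf⟩ := exists_transpose_mul_mul_eq_and_mul_eq (U := f * J) (W := J) hM hw
    (by rw [transpose_mul, ← toBlocks_fromBlocks₂₂ A' 0 0 (diagonal w), ← hf, ← hJt]
        simp only [Matrix.mul_assoc])
    (by rw [hJt, hMdef, toBlocks_fromBlocks₂₂])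
  obtain ⟨g₁₁, g₁₂, g₂₁, g₂₂, hg⟩ : ∃ g₁₁ g₁₂ g₂₁ g₂₂, T * f = fromBlocks g₁₁ g₁₂ g₂₁ g₂₂ :=
    ⟨_, _, _, _, (fromBlocks_toBlocks _).symm⟩
  have hcols : fromRows g₁₂ g₂₂ = (fromRows 0 1 : Matrix (m ⊕ κ) κ F) := by
    rw [← Matrix.mul_assoc, hg, hJ, toBlocks_fromBlocks₁₂, toBlocks_fromBlocks₂₂] at hTf
    exact hTf
  obtain ⟨rfl, rfl⟩ := fromRows_inj hcols
  have hgM : (fromBlocks g₁₁ 0 g₂₁ 1)ᵀ * M * fromBlocks g₁₁ 0 g₂₁ 1 =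
      fromBlocks A' 0 0 (diagonal w) := by
    rw [← hg, ← hf, transpose_mul, Matrix.mul_assoc, Matrix.mul_assoc, ← Matrix.mul_assoc M,
      ← Matrix.mul_assoc Tᵀ, ← Matrix.mul_assoc Tᵀ, hT, ← Matrix.mul_assoc]
  rw [hMdef, fromBlocks_transpose, fromBlocks_multiply, fromBlocks_multiply, fromBlocks_inj] at hgM
  obtain ⟨h₁₁, -, h₂₁, -⟩ := hgM
  have hg₂₁ : g₂₁ = 0 := by
    ext k i
    simpa [hw k] using congrFun₂ h₂₁ k i
  exact ⟨g₁₁, by simpa [hg₂₁] using h₁₁⟩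

end WittMatrix

section Congruence

variable {R m n l : Type*} [CommRing R] [Fintype m] [Fintype n] [Fintype l] [DecidableEq m]
  [DecidableEq n] [DecidableEq l]

/-- Two square matrices are congruent if they are Gram matrices of one bilinear form in two bases.
The index types may differ, so the inverse `Q` of the change of basis `P` is part of the data. -/
def IsCongr (A : Matrix m m R) (B : Matrix n n R) : Prop :=
  ∃ (P : Matrix m n R) (Q : Matrix n m R), P * Q = 1 ∧ Q * P = 1 ∧ Pᵀ * A * P = B

namespace IsCongr

variable {A : Matrix m m R} {B : Matrix n n R} {C : Matrix l l R}

theorem trans (hAB : IsCongr A B) (hBC : IsCongr B C) : IsCongr A C := by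
  obtain ⟨P, Q, hPQ, hQP, rfl⟩ := hAB
  obtain ⟨P', Q', hPQ', hQP', rfl⟩ := hBC
  refine ⟨P * P', Q' * Q, ?_, ?_, by simp only [transpose_mul, Matrix.mul_assoc]⟩
  · rw [Matrix.mul_assoc, ← Matrix.mul_assoc P', hPQ', Matrix.one_mul, hPQ]
  · rw [Matrix.mul_assoc, ← Matrix.mul_assoc Q, hQP, Matrix.one_mul, hQP']

theorem submatrix (A : Matrix m m R) (e : n ≃ m) : IsCongr A (A.submatrix e e) := by
  refine ⟨(1 : Matrix m m R).submatrix id e, (1 : Matrix m m R).submatrix e id, ?_, ?_, ?_⟩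
  · rw [submatrix_mul_equiv, Matrix.one_mul, submatrix_id_id]
  · rw [← submatrix_mul _ _ _ _ _ Function.bijective_id, Matrix.one_mul, submatrix_one_equiv]
  · rw [transpose_submatrix, transpose_one]
    nth_rw 1 [← submatrix_id_id A]
    simp only [← submatrix_mul _ _ _ _ _ Function.bijective_id, Matrix.one_mul, Matrix.mul_one]

theorem fromBlocks (h : IsCongr A B) (D : Matrix l l R) :
    IsCongr (fromBlocks A 0 0 D) (fromBlocks B 0 0 D) := by
  obtain ⟨P, Q, hPQ, hQP, rfl⟩ := h
  refine ⟨.fromBlocks P 0 0 1, .fromBlocks Q 0 0 1, ?_, ?_, ?_⟩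
  · simp [fromBlocks_multiply, hPQ]
  · simp [fromBlocks_multiply, hQP]
  · simp [fromBlocks_transpose, fromBlocks_multiply]

theorem exists_det_eq (h : IsCongr A B) (e : m ≃ n) : ∃ s, IsUnit s ∧ B.det = s ^ 2 * A.det := by
  obtain ⟨P, Q, hPQ, -, rfl⟩ := h
  refine ⟨(P.submatrix id e).det, .of_mul_eq_one (Q.submatrix e id).det ?_, ?_⟩
  · rw [← det_mul, submatrix_mul_equiv, hPQ, submatrix_id_id, det_one]
  · have hsub : (Pᵀ * A * P).submatrix e e = (P.submatrix id e)ᵀ * A * P.submatrix id e := by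
      rw [transpose_submatrix]
      nth_rw 2 [← submatrix_id_id A]
      simp only [← submatrix_mul _ _ _ _ _ Function.bijective_id]
    rw [← det_submatrix_equiv_self e, hsub, det_mul, det_mul, det_transpose]
    ring

end IsCongr

variable {F : Type*} [Field F]

theorem mem_normSubgroup_neg_mul_iff {a b : F} (ha : a ≠ 0) {c : Fˣ} :
    c ∈ normSubgroup (-(a * b)) ↔ ∃ x y, a * x ^ 2 + b * y ^ 2 = a * c := by
  rw [mem_normSubgroup]
  constructor
  · rintro ⟨x, y, hxy⟩
    exact ⟨x, a * y, by rw [← hxy]; ring⟩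
  · rintro ⟨x, y, hxy⟩
    refine ⟨x, y / a, mul_left_cancel₀ ha ?_⟩
    rw [← hxy]
    field_simp
    ring

theorem IsCongr.ne_zero_of_diagonal {A : Matrix n n F} {w : m → F} (h : IsCongr A (diagonal w))
    (e : n ≃ m) (hA : A.det ≠ 0) (k : m) : w k ≠ 0 := by
  obtain ⟨s, hs, hdet⟩ := h.exists_det_eq e
  rw [det_diagonal] at hdet
  exact fun hk => mul_ne_zero (pow_ne_zero 2 hs.ne_zero) hA
    (hdet ▸ Finset.prod_eq_zero (Finset.mem_univ k) hk)

theorem sumElim_fin_two_eta {α β : Type*} (v : Fin 2 ⊕ α → β) :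
    Sum.elim ![v (.inl 0), v (.inl 1)] (v ∘ .inr) = v := by
  ext (k | k)
  · fin_cases k <;> rfl
  · rfl

theorem exists_transpose_mul_diagonal_pair_mul_eq {a b x y u : F} (hu : u ≠ 0)
    (hxy : a * x ^ 2 + b * y ^ 2 = u) : ∃ P Q : Matrix (Fin 2) (Fin 2) F,
      P * Q = 1 ∧ Pᵀ * diagonal ![a, b] * P = diagonal ![u, a * b * u] ∧ P.det = u := by
  refine ⟨!![x, -b * y; y, a * x], u⁻¹ • !![a * x, b * y; -y, x], ?_, ?_, ?_⟩
  · rw [Matrix.mul_smul, mul_fin_two, one_fin_two, inv_smul_eq_iff₀ hu, smul_of]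
    ext i k
    fin_cases i <;> fin_cases k <;> simp [← hxy] <;> ring
  · ext i k
    fin_cases i <;> fin_cases k <;> simp [← hxy, Matrix.mul_apply, Fin.sum_univ_two] <;> ring
  · rw [det_fin_two_of, ← hxy]
    ring

theorem isCongr_diagonal_pair {a b x y u : F} (hu : u ≠ 0) (hxy : a * x ^ 2 + b * y ^ 2 = u) :
    IsCongr (diagonal ![a, b]) (diagonal ![u, a * b * u]) := by
  obtain ⟨P, Q, hPQ, hP, -⟩ := exists_transpose_mul_diagonal_pair_mul_eq hu hxy
  exact ⟨P, Q, hPQ, mul_eq_one_comm.mp hPQ, hP⟩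

theorem IsCongr.diagonal_sumElim {v : m → R} {v' : n → R} (h : IsCongr (diagonal v) (diagonal v'))
    (w : l → R) : IsCongr (diagonal (Sum.elim v w)) (diagonal (Sum.elim v' w)) := by
  rw [← fromBlocks_diagonal, ← fromBlocks_diagonal]
  exact h.fromBlocks _

variable [NeZero (2 : F)]

theorem exists_isCongr_diagonal {J : Matrix n n F} (hJ : Jᵀ = J) (e : n ≃ m) :
    ∃ w : m → F, IsCongr J (diagonal w) := by
  have : Invertible (2 : F) := invertibleOfNonzero two_ne_zero
  obtain ⟨b, hb⟩ :=
    LinearMap.BilinForm.exists_orthogonal_basis (isSymm_toLinearMap₂'_of_transpose_eq hJ)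
  let e' :=
    ((finCongr (Module.finrank_fintype_fun_eq_card F)).trans (Fintype.equivFin n).symm).trans e
  let b' : Module.Basis m F (n → F) := b.reindex e'
  have hb' : (toLinearMap₂' F J).IsOrthoᵢ b' := fun k l hkl => by
    simpa [b', Function.onFun] using hb (e'.symm.injective.ne hkl)
  let P : Matrix n m F := (Pi.basisFun F n).toMatrix b'
  refine ⟨fun k => (Pᵀ * J * P) k k, P, b'.toMatrix (Pi.basisFun F n),
    Module.Basis.toMatrix_mul_toMatrix_flip _ _, Module.Basis.toMatrix_mul_toMatrix_flip _ _, ?_⟩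
  ext k l
  rcases eq_or_ne k l with rfl | hkl
  · rw [diagonal_apply_eq]
  · rw [diagonal_apply_ne _ hkl, ← toLinearMap₂'_col_apply]
    exact hb' hkl

theorem isCongr_diagonal_pair_of_isSquare {a b u : F} (ha : a ≠ 0) (hb : b ≠ 0) (hu : u ≠ 0)
    (hab : IsSquare (-(a * b))) : IsCongr (diagonal ![a, b]) (diagonal ![u, a * b * u]) := by
  have hmem : Units.mk0 (u / a) (div_ne_zero hu ha) ∈ normSubgroup (-(a * b)) := by
    rw [normSubgroup_eq_top_of_isSquare (neg_ne_zero.mpr (mul_ne_zero ha hb)) hab]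
    exact Subgroup.mem_top _
  obtain ⟨x, y, hxy⟩ := (mem_normSubgroup_neg_mul_iff ha).mp hmem
  exact isCongr_diagonal_pair hu (hxy.trans (mul_div_cancel₀ u ha))

theorem isCongr_diagonal_pair_hyperbolicPlane {a b t : F} (ha : a ≠ 0) (ht : t ≠ 0)
    (hab : -(a * b) = t * t) : IsCongr (diagonal ![a, b]) !![0, 1; 1, 0] := by
  have hmul : !![t, 1 / (2 * a * t); a, -1 / (2 * t * t)] *
      !![1 / (2 * t), 1 / (2 * a); a * t, -(t * t)] = 1 := by
    rw [mul_fin_two, one_fin_two]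
    congr! <;> field_simp <;> ring
  have hb : b = -(t * t) / a := by rw [← hab, neg_neg, mul_div_cancel_left₀ b ha]
  refine ⟨_, _, hmul, mul_eq_one_comm.mp hmul, ?_⟩
  rw [hb]
  ext i k
  fin_cases i <;> fin_cases k <;> simp [Matrix.mul_apply, Fin.sum_univ_two] <;> field_simp <;> ring

theorem isCongr_hyperbolicPlane {J : Matrix (Fin 2) (Fin 2) F} (hJ : Jᵀ = J) (hJ0 : J.det ≠ 0)
    (hdet : IsSquare (-J.det)) : IsCongr J !![0, 1; 1, 0] := by
  obtain ⟨w, hw⟩ := exists_isCongr_diagonal hJ (Equiv.refl (Fin 2))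
  have hw0 := hw.ne_zero_of_diagonal (Equiv.refl _) hJ0
  obtain ⟨s, -, hs⟩ := hw.exists_det_eq (Equiv.refl _)
  rw [det_diagonal, Fin.prod_univ_two] at hs
  obtain ⟨t, ht⟩ : IsSquare (-(w 0 * w 1)) := by
    rw [hs, ← mul_neg]
    exact (IsSquare.sq s).mul hdet
  have ht0 : t ≠ 0 := left_ne_zero_of_mul (ht ▸ neg_ne_zero.mpr (mul_ne_zero (hw0 0) (hw0 1)))
  rw [show w = ![w 0, w 1] from List.ofFn_injective rfl] at hw
  exact hw.trans (isCongr_diagonal_pair_hyperbolicPlane (hw0 0) ht0 ht)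

theorem exists_isCongr_diagonal_not_isSquare {J : Matrix n n F} {r : ℕ} (hJ : Jᵀ = J)
    (hJ0 : J.det ≠ 0) (e : n ≃ Fin 2 ⊕ Fin r) (hdet : r = 0 → ¬ IsSquare (-J.det)) {d : F}
    (hd : ¬ IsSquare d) : ∃ w : Fin 2 ⊕ Fin r → F, ¬ IsSquare (-(w (.inl 0) * w (.inl 1))) ∧
      IsCongr J (diagonal w) := by
  obtain ⟨w, hw⟩ := exists_isCongr_diagonal hJ e
  have hw0 := hw.ne_zero_of_diagonal e hJ0
  by_cases hsq : IsSquare (-(w (.inl 0) * w (.inl 1)))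
  swap
  · exact ⟨w, hsq, hw⟩
  obtain _ | r := r
  · obtain ⟨s, hs, hdets⟩ := hw.exists_det_eq e
    have hdet_eq : -J.det = -(w (.inl 0) * w (.inl 1)) / s ^ 2 := by
      simp only [det_diagonal, Fintype.prod_sum_type, Fin.prod_univ_two, Finset.univ_eq_empty,
        Finset.prod_empty, mul_one] at hdets
      rw [hdets, neg_div, mul_div_cancel_left₀ _ (pow_ne_zero 2 hs.ne_zero)]
    exact absurd (hdet_eq ▸ hsq.div (IsSquare.sq s)) (hdet rfl)
  -- The hyperbolic plane represents `-d * c` for every further diagonal entry `c`.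
  · set c := w (.inr 0)
    have hc : c ≠ 0 := hw0 (.inr 0)
    have hd0 : d ≠ 0 := fun h => hd (h ▸ .zero)
    have hplane := (isCongr_diagonal_pair_of_isSquare (hw0 (.inl 0)) (hw0 (.inl 1))
      (mul_ne_zero (neg_ne_zero.mpr hd0) hc) hsq).diagonal_sumElim (w ∘ .inr)
    rw [sumElim_fin_two_eta] at hplane
    have hswap := (hw.trans hplane).trans
      (.submatrix _ (Equiv.swap (Sum.inl 1) (Sum.inr (0 : Fin (r + 1)))))
    rw [submatrix_diagonal_equiv] at hswap
    refine ⟨_, fun ⟨s, hs⟩ => hd ?_, hswap⟩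
    have hs' : d * c ^ 2 = s * s := by
      rw [← hs, Function.comp_apply, Function.comp_apply, Equiv.swap_apply_left,
        Equiv.swap_apply_of_ne_of_ne (by simp) (by simp)]
      simp only [Sum.elim_inl, Sum.elim_inr, Function.comp_apply, cons_val_zero]
      ring
    rw [← mul_div_cancel_right₀ d (pow_ne_zero 2 hc), hs']
    exact (IsSquare.mul_self s).div (.sq c)

end Congruence

section Orbits

variable {E : Type} [Field E] {n : ℕ} {j g h x x' x'' : Matrix (Fin n) (Fin n) E} {σ : E →+* E}

theorem OrthPair.Gj.mul (hg : Gj j g) (hh : Gj j h) : Gj j (g * h) := by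
  refine ⟨hg.1.mul hh.1, ?_⟩
  calc (g * h)ᵀ * j * (g * h) = hᵀ * (gᵀ * j * g) * h := by
        simp only [transpose_mul, Matrix.mul_assoc]
    _ = j := by rw [hg.2, hh.2]

theorem OrthPair.Gj.of_mul_eq_one (hg : Gj j g) (hgh : g * h = 1) : Gj j h := by
  refine ⟨.of_mul_eq_one g (mul_eq_one_comm.mp hgh), ?_⟩
  calc hᵀ * j * h = hᵀ * (gᵀ * j * g) * h := by rw [hg.2]
    _ = (g * h)ᵀ * j * (g * h) := by simp only [transpose_mul, Matrix.mul_assoc]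
    _ = j := by rw [hgh, transpose_one, Matrix.one_mul, Matrix.mul_one]

theorem orbSG_iff_mul_map_eq :
    orbSG σ j x x' ↔ ∃ g, Gj j g ∧ g.det = 1 ∧ x' * g.map σ = g * x := by
  refine exists_congr fun g => and_congr_right fun _ => and_congr_right fun hdet => ?_
  have hunit : IsUnit (g.map σ).det := by
    rw [← RingHom.mapMatrix_apply, ← RingHom.map_det, hdet, map_one]
    exact isUnit_one
  exact ⟨fun hx => by rw [hx, nonsing_inv_mul_cancel_right _ _ hunit],
    fun hx => by rw [← hx, mul_nonsing_inv_cancel_right _ _ hunit]⟩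

theorem OrthPair.orbSG.symm (hx : orbSG σ j x x') : orbSG σ j x' x := by
  obtain ⟨g, hg, hdet, hgx⟩ := orbSG_iff_mul_map_eq.mp hx
  obtain ⟨h, hgh, hhg⟩ := isUnit_iff_exists.mp hg.1
  refine orbSG_iff_mul_map_eq.mpr ⟨h, hg.of_mul_eq_one hgh, ?_, ?_⟩
  · simpa [hdet] using congrArg Matrix.det hgh
  · calc x * h.map σ = h * (g * x) * h.map σ := by rw [← Matrix.mul_assoc h, hhg, Matrix.one_mul]
      _ = h * x' * (g * h).map σ := by rw [← hgx, Matrix.map_mul]; simp only [Matrix.mul_assoc]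
      _ = h * x' := by rw [hgh, Matrix.map_one σ (map_zero σ) (map_one σ), Matrix.mul_one]

theorem OrthPair.orbSG.trans (hx : orbSG σ j x x') (hx' : orbSG σ j x' x'') : orbSG σ j x x'' := by
  obtain ⟨g, hg, hgdet, hgx⟩ := orbSG_iff_mul_map_eq.mp hx
  obtain ⟨h, hh, hhdet, hhx⟩ := orbSG_iff_mul_map_eq.mp hx'
  refine orbSG_iff_mul_map_eq.mpr ⟨h * g, hh.mul hg, by rw [det_mul, hgdet, hhdet, one_mul], ?_⟩
  rw [Matrix.map_mul, ← Matrix.mul_assoc, hhx, Matrix.mul_assoc, hgx, Matrix.mul_assoc]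

theorem sxj_one : SXj σ j 1 :=
  ⟨⟨⟨isUnit_one, by rw [transpose_one, Matrix.one_mul, Matrix.mul_one]⟩,
    by rw [Matrix.map_one σ (map_zero σ) (map_one σ), Matrix.one_mul]⟩, det_one⟩

theorem exists_forall_orbSG_iff : (∃ x₀, SXj σ j x₀ ∧ ∀ x, SXj σ j x → orbSG σ j x₀ x) ↔
    ∀ x, SXj σ j x → orbSG σ j 1 x :=
  ⟨fun ⟨_, _, horb⟩ x hx => (horb 1 sxj_one).symm.trans (horb x hx), fun horb => ⟨1, sxj_one, horb⟩⟩

/- The cocycle `x = g σ(g)⁻¹` lies in `SX^j`, so it is a coboundary `γ σ(γ)⁻¹`; then `f = γ⁻¹ g`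
is `σ`-fixed. -/
theorem exists_map_eq_of_forall_orbSG {κ : Type*} [Fintype κ] [DecidableEq κ]
    (hσ : ∀ z, σ (σ z) = z) (hj : j.map σ = j) (horb : ∀ x, SXj σ j x → orbSG σ j 1 x)
    {g : Matrix (Fin n) κ E} {h : Matrix κ (Fin n) E} (hgh : g * h = 1) (hhg : h * g = 1)
    (hfix : (gᵀ * j * g).map σ = gᵀ * j * g) (hdet : (g * h.map σ).det = 1) :
    ∃ f : Matrix (Fin n) κ E, f.map σ = f ∧ fᵀ * j * f = gᵀ * j * g := by
  have hmap_map {a b : Type _} (M : Matrix a b E) : (M.map σ).map σ = M := by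
    ext
    exact hσ _
  have hmap_one {a : Type _} [DecidableEq a] : (1 : Matrix a a E).map σ = 1 :=
    Matrix.map_one σ (map_zero σ) (map_one σ)
  have hx : SXj σ j (g * h.map σ) := by
    refine ⟨⟨⟨(isUnit_iff_isUnit_det _).mpr (hdet ▸ isUnit_one), ?_⟩, ?_⟩, hdet⟩
    · calc (g * h.map σ)ᵀ * j * (g * h.map σ)
          = (h.map σ)ᵀ * (gᵀ * j * g).map σ * h.map σ := by
            rw [hfix]
            simp only [transpose_mul, Matrix.mul_assoc]
        _ = ((g * h)ᵀ * j * (g * h)).map σ := by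
            simp only [Matrix.map_mul, transpose_mul, Matrix.mul_assoc, transpose_map]
        _ = j := by rw [hgh, transpose_one, Matrix.one_mul, Matrix.mul_one, hj]
    · calc g * h.map σ * (g * h.map σ).map σ = g * (h * g).map σ * h := by
            rw [Matrix.map_mul, Matrix.map_mul, hmap_map]
            simp only [Matrix.mul_assoc]
        _ = 1 := by rw [hhg, hmap_one, Matrix.mul_one, hgh]
  obtain ⟨γ, hγ, -, hγx⟩ := orbSG_iff_mul_map_eq.mp (horb _ hx)
  obtain ⟨γ', hγγ', hγ'γ⟩ := isUnit_iff_exists.mp hγ.1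
  refine ⟨γ' * g, ?_, ?_⟩
  · have hleft : γ' * g * (h.map σ * γ.map σ) = 1 := by
      rw [← Matrix.mul_assoc, Matrix.mul_assoc γ', Matrix.mul_assoc γ', hγx, Matrix.mul_one, hγ'γ]
    have hright : h.map σ * γ.map σ * (γ' * g).map σ = 1 := by
      calc h.map σ * γ.map σ * (γ' * g).map σ = (h * (γ * γ') * g).map σ := by
            simp only [Matrix.map_mul, Matrix.mul_assoc]
        _ = 1 := by rw [hγγ', Matrix.mul_one, hhg, hmap_one]
    rw [← Matrix.one_mul ((γ' * g).map σ), ← hleft, Matrix.mul_assoc, hright, Matrix.mul_one]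
  · calc (γ' * g)ᵀ * j * (γ' * g) = gᵀ * (γ'ᵀ * j * γ') * g := by
          simp only [transpose_mul, Matrix.mul_assoc]
      _ = gᵀ * j * g := by rw [(hγ.of_mul_eq_one hγγ').2]

end Orbits

section Descent

variable {F : Type*} {E : Type} [Field F] [Field E] [Algebra F E] {n : ℕ} {σ : E →+* E}

theorem exists_transpose_mul_diagonal_mul_eq_of_isCongr {m κ l : Type*} [Fintype m] [DecidableEq m]
    [Fintype κ] [DecidableEq κ] [Fintype l] [DecidableEq l] [NeZero (2 : F)] {J : Matrix l l F}
    {v v' : m → F} {w : κ → F} (hw : ∀ k, w k ≠ 0) (hJ : IsCongr J (diagonal (Sum.elim v w)))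
    {f : Matrix l (m ⊕ κ) F} (hf : fᵀ * J * f = diagonal (Sum.elim v' w)) :
    ∃ h : Matrix m m F, hᵀ * diagonal v * h = diagonal v' := by
  obtain ⟨P, Q, hPQ, -, hP⟩ := hJ
  refine exists_transpose_mul_mul_eq_of_fromBlocks (f := Q * f) (diagonal_transpose v) hw ?_
  rw [fromBlocks_diagonal, fromBlocks_diagonal]
  calc (Q * f)ᵀ * diagonal (Sum.elim v w) * (Q * f) = fᵀ * ((P * Q)ᵀ * J * (P * Q)) * f := by
        rw [← hP]
        simp only [transpose_mul, Matrix.mul_assoc]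
    _ = diagonal (Sum.elim v' w) := by
        rw [hPQ, transpose_one, Matrix.one_mul, Matrix.mul_one, hf]

theorem exists_map_algebraMap_eq {l κ : Type*} {f : Matrix l κ E} (hf : f.map σ = f)
    (hσ : ∀ z, σ z = z ↔ z ∈ Set.range (algebraMap F E)) :
    ∃ f₀ : Matrix l κ F, f₀.map (algebraMap F E) = f := by
  choose f₀ hf₀ using fun a b => (hσ (f a b)).mp (congrFun₂ hf a b)
  exact ⟨of f₀, Matrix.ext hf₀⟩

theorem map_map_algebraMap_eq {l κ : Type*} (f : Matrix l κ F)
    (hσ : ∀ z, σ z = z ↔ z ∈ Set.range (algebraMap F E)) :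
    (f.map (algebraMap F E)).map σ = f.map (algebraMap F E) := by
  ext a b
  exact (hσ _).mpr ⟨f a b, rfl⟩

theorem det_mul_mul_map_eq_one {m : Type*} [Fintype m] [DecidableEq m] {P : Matrix (Fin n) m E}
    {Q : Matrix m (Fin n) E} {X Y : Matrix m m E} (hPQ : P * Q = 1) (hQP : Q * P = 1)
    (hQ : Q.map σ = Q) (hXY : X * Y = 1) (hX : σ X.det = X.det) :
    (P * X * (Y * Q).map σ).det = 1 := by
  have hdet : X.det * (Y.map σ).det = 1 := by
    rw [← RingHom.mapMatrix_apply, ← RingHom.map_det, ← hX, ← map_mul, ← det_mul, hXY, det_one,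
      map_one]
  rw [Matrix.map_mul, hQ, Matrix.mul_assoc P, ← Matrix.mul_assoc X, ← Matrix.mul_assoc P,
    det_conj_of_mul_eq_one hPQ hQP, det_mul, hdet]

theorem exists_transpose_mul_mul_eq_of_forall_orbSG {m : Type*} [Fintype m] [DecidableEq m]
    (hσσ : ∀ z, σ (σ z) = z) (hσ : ∀ z, σ z = z ↔ z ∈ Set.range (algebraMap F E))
    {J : Matrix (Fin n) (Fin n) F} {D D' : Matrix m m F}
    (horb : ∀ x, SXj σ (J.map (algebraMap F E)) x → orbSG σ (J.map (algebraMap F E)) 1 x)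
    (hJ : IsCongr J D) {X : Matrix m m E} (hXu : IsUnit X.det) (hX : σ X.det = X.det)
    (hXD : Xᵀ * D.map (algebraMap F E) * X = D'.map (algebraMap F E)) :
    ∃ f : Matrix (Fin n) m F, fᵀ * J * f = D' := by
  set ι := algebraMap F E
  obtain ⟨P, Q, hPQ, hQP, rfl⟩ := hJ
  have hPQι : P.map ι * Q.map ι = 1 := by
    rw [← Matrix.map_mul, hPQ, Matrix.map_one ι (map_zero ι) (map_one ι)]
  have hQPι : Q.map ι * P.map ι = 1 := by
    rw [← Matrix.map_mul, hQP, Matrix.map_one ι (map_zero ι) (map_one ι)]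
  have hgram : (P.map ι * X)ᵀ * J.map ι * (P.map ι * X) = D'.map ι := by
    rw [← hXD]
    simp only [Matrix.map_mul, transpose_mul, transpose_map, Matrix.mul_assoc]
  obtain ⟨f, hfσ, hf⟩ := exists_map_eq_of_forall_orbSG hσσ (map_map_algebraMap_eq J hσ) horb
    (g := P.map ι * X) (h := X⁻¹ * Q.map ι)
    (by rw [Matrix.mul_assoc, mul_nonsing_inv_cancel_left _ _ hXu, hPQι])
    (by rw [Matrix.mul_assoc, ← Matrix.mul_assoc (Q.map ι), hQPι, Matrix.one_mul,
      nonsing_inv_mul _ hXu])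
    (by rw [hgram]; exact map_map_algebraMap_eq _ hσ)
    (det_mul_mul_map_eq_one hPQι hQPι (map_map_algebraMap_eq Q hσ) (mul_nonsing_inv _ hXu) hX)
  obtain ⟨f, rfl⟩ := exists_map_algebraMap_eq hfσ hσ
  refine ⟨f, Matrix.map_injective ι.injective ?_⟩
  beta_reduce
  rw [← hgram, ← hf, Matrix.map_mul, Matrix.map_mul, transpose_map]

theorem exists_add_eq_of_forall_orbSG [NeZero (2 : F)] (hσσ : ∀ z, σ (σ z) = z)
    (hσ : ∀ z, σ z = z ↔ z ∈ Set.range (algebraMap F E)) {J : Matrix (Fin n) (Fin n) F}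
    (horb : ∀ x, SXj σ (J.map (algebraMap F E)) x → orbSG σ (J.map (algebraMap F E)) 1 x)
    {κ : Type*} [Fintype κ] [DecidableEq κ] {a b u : F} {w : κ → F}
    (hJ : IsCongr J (diagonal (Sum.elim ![a, b] w))) (hw : ∀ k, w k ≠ 0) (hu : u ≠ 0) {x y : E}
    (hxy : algebraMap F E a * x ^ 2 + algebraMap F E b * y ^ 2 = algebraMap F E u) :
    ∃ x y : F, a * x ^ 2 + b * y ^ 2 = u := by
  set ι := algebraMap F E
  obtain ⟨R, -, -, hR, hRdet⟩ :=
    exists_transpose_mul_diagonal_pair_mul_eq ((map_ne_zero ι).mpr hu) hxy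
  have hdet : (fromBlocks R 0 0 (1 : Matrix κ κ E)).det = ι u := by
    rw [det_fromBlocks_zero₂₁, det_one, mul_one, hRdet]
  have hmap (v : Fin 2 → F) : (diagonal (Sum.elim v w)).map ι =
      fromBlocks (diagonal (ι ∘ v)) 0 0 (diagonal (ι ∘ w)) := by
    rw [diagonal_map (map_zero ι), fromBlocks_diagonal]
    congr 1
    exact Sum.comp_elim ι v w
  have hab : ι ∘ ![a, b] = ![ι a, ι b] := by ext k; fin_cases k <;> rfl
  have hu' : ι ∘ ![u, a * b * u] = ![ι u, ι a * ι b * ι u] := by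
    ext k; fin_cases k <;> simp
  have hgram : (fromBlocks R 0 0 1)ᵀ * (diagonal (Sum.elim ![a, b] w)).map ι * fromBlocks R 0 0 1 =
      (diagonal (Sum.elim ![u, a * b * u] w)).map ι := by
    rw [hmap, hmap, hab, hu', ← hR, fromBlocks_transpose, fromBlocks_multiply, fromBlocks_multiply]
    simp
  obtain ⟨f, hf⟩ := exists_transpose_mul_mul_eq_of_forall_orbSG hσσ hσ horb hJ
    (hdet ▸ ((map_ne_zero ι).mpr hu).isUnit) (hdet ▸ (hσ _).mpr ⟨u, rfl⟩) hgram
  obtain ⟨h, hh⟩ := exists_transpose_mul_diagonal_mul_eq_of_isCongr hw hJ hf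
  refine ⟨h 0 0, h 1 0, ?_⟩
  calc a * h 0 0 ^ 2 + b * h 1 0 ^ 2 = (hᵀ * diagonal ![a, b] * h) 0 0 := by
        simp only [Matrix.mul_apply, transpose_apply, Fin.sum_univ_two, diagonal_apply,
          cons_val_zero, cons_val_one, if_true, one_ne_zero, zero_ne_one, if_false]
        ring
    _ = u := by simp [hh]

theorem not_forall_orbSG (p : ℕ) [Fact p.Prime] [Algebra ℚ_[p] F] [FiniteDimensional ℚ_[p] F]
    (hσσ : ∀ z, σ (σ z) = z) (hσ : ∀ z, σ z = z ↔ z ∈ Set.range (algebraMap F E))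
    {J : Matrix (Fin n) (Fin n) F} (hJ : Jᵀ = J) (hJ0 : J.det ≠ 0) (hn : 2 ≤ n)
    (hdet : n = 2 → ¬ IsSquare (-J.det)) {e : F} (he : ¬ IsSquare e)
    (heE : IsSquare (algebraMap F E e)) :
    ¬ ∀ x, SXj σ (J.map (algebraMap F E)) x → orbSG σ (J.map (algebraMap F E)) 1 x := by
  intro horb
  have : CharZero F := charZero_of_injective_algebraMap (algebraMap ℚ_[p] F).injective
  obtain ⟨r, rfl⟩ := Nat.exists_eq_add_of_le hn
  obtain ⟨w, hw, hJw⟩ := exists_isCongr_diagonal_not_isSquare hJ hJ0 finSumFinEquiv.symm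
    (fun hr => hdet (by rw [hr])) he
  have hw0 := hJw.ne_zero_of_diagonal finSumFinEquiv.symm hJ0
  obtain ⟨c, hc, hc'⟩ := exists_mem_normSubgroup_mul_notMem p he hw
  obtain ⟨x, y, hxy⟩ := mem_normSubgroup.mp hc
  obtain ⟨ι, hι⟩ := heE
  rw [← sumElim_fin_two_eta w] at hJw
  refine hc' ((mem_normSubgroup_neg_mul_iff (hw0 (.inl 0))).mpr
    (exists_add_eq_of_forall_orbSG hσσ hσ horb hJw (fun k => hw0 (.inr k))
      (mul_ne_zero (hw0 (.inl 0)) c.ne_zero) (x := algebraMap F E x)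
      (y := algebraMap F E (w (.inl 0) * y) * ι) ?_))
  rw [mul_pow, sq ι, ← hι, ← hxy]
  simp only [map_mul, map_pow, map_sub, map_neg]
  ring

end Descent

section HyperbolicPlane

variable {E : Type} [Field E] {n : ℕ} {σ : E →+* E}

section OrbitCongruence

variable {j g x x' P Q : Matrix (Fin n) (Fin n) E}

theorem OrthPair.Gj.congr (hg : Gj j g) (hPQ : P * Q = 1) : Gj (Pᵀ * j * P) (Q * g * P) := by
  have hP : IsUnit P := .of_mul_eq_one Q hPQ
  have hQ : IsUnit Q := .of_mul_eq_one P (mul_eq_one_comm.mp hPQ)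
  refine ⟨(hQ.mul hg.1).mul hP, ?_⟩
  calc (Q * g * P)ᵀ * (Pᵀ * j * P) * (Q * g * P)
      = Pᵀ * (gᵀ * ((P * Q)ᵀ * j * (P * Q)) * g) * P := by
        simp only [transpose_mul, Matrix.mul_assoc]
    _ = Pᵀ * j * P := by rw [hPQ, transpose_one, Matrix.one_mul, Matrix.mul_one, hg.2]

theorem OrthPair.SXj.congr (hx : SXj σ j x) (hPQ : P * Q = 1) (hP : P.map σ = P)
    (hQ : Q.map σ = Q) : SXj σ (Pᵀ * j * P) (Q * x * P) := by
  have hQP : Q * P = 1 := mul_eq_one_comm.mp hPQ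
  refine ⟨⟨hx.1.1.congr hPQ, ?_⟩, by rw [det_conj_of_mul_eq_one hQP hPQ, hx.2]⟩
  calc Q * x * P * (Q * x * P).map σ = Q * (x * (P * Q) * x.map σ) * P := by
        simp only [Matrix.map_mul, hP, hQ, Matrix.mul_assoc]
    _ = 1 := by rw [hPQ, Matrix.mul_one, hx.1.2, Matrix.mul_one, hQP]

theorem OrthPair.orbSG.congr (hx : orbSG σ j x x') (hPQ : P * Q = 1) (hP : P.map σ = P)
    (hQ : Q.map σ = Q) : orbSG σ (Pᵀ * j * P) (Q * x * P) (Q * x' * P) := by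
  obtain ⟨g, hg, hdet, hgx⟩ := orbSG_iff_mul_map_eq.mp hx
  refine orbSG_iff_mul_map_eq.mpr ⟨Q * g * P, hg.congr hPQ,
    by rw [det_conj_of_mul_eq_one (mul_eq_one_comm.mp hPQ) hPQ, hdet], ?_⟩
  calc Q * x' * P * (Q * g * P).map σ = Q * (x' * (P * Q) * g.map σ) * P := by
        simp only [Matrix.map_mul, hP, hQ, Matrix.mul_assoc]
    _ = Q * (g * (P * Q) * x) * P := by rw [hPQ, Matrix.mul_one, Matrix.mul_one, hgx]
    _ = Q * g * P * (Q * x * P) := by simp only [Matrix.mul_assoc]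

theorem forall_orbSG_of_congr (hPQ : P * Q = 1) (hP : P.map σ = P) (hQ : Q.map σ = Q)
    (horb : ∀ x, SXj σ (Pᵀ * j * P) x → orbSG σ (Pᵀ * j * P) 1 x) (x : Matrix (Fin n) (Fin n) E)
    (hx : SXj σ j x) : orbSG σ j 1 x := by
  have hj : Qᵀ * (Pᵀ * j * P) * Q = j := by
    calc Qᵀ * (Pᵀ * j * P) * Q = (P * Q)ᵀ * j * (P * Q) := by
          simp only [transpose_mul, Matrix.mul_assoc]
      _ = j := by rw [hPQ, transpose_one, Matrix.one_mul, Matrix.mul_one]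
  have hx' : P * (Q * x * P) * Q = x := by
    calc P * (Q * x * P) * Q = P * Q * x * (P * Q) := by simp only [Matrix.mul_assoc]
      _ = x := by rw [hPQ, Matrix.one_mul, Matrix.mul_one]
  have horbx := (horb _ (hx.congr hPQ hP hQ)).congr (mul_eq_one_comm.mp hPQ) hQ hP
  rwa [hj, Matrix.mul_one, hPQ, hx'] at horbx

end OrbitCongruence

theorem exists_ne_zero_mul_map_eq (hσσ : ∀ z, σ (σ z) = z) (hσ1 : σ ≠ RingHom.id E) {t : E}
    (ht : t * σ t = 1) : ∃ s, s ≠ 0 ∧ t * σ s = s := by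
  suffices ∃ z, z + t * σ z ≠ 0 by
    obtain ⟨z, hz⟩ := this
    refine ⟨_, hz, ?_⟩
    rw [map_add, map_mul, hσσ, mul_add, ← mul_assoc, ht, one_mul, add_comm]
  by_contra! hzero
  have ht1 : t = -1 := by
    simpa [add_eq_zero_iff_eq_neg'] using hzero 1
  exact hσ1 (RingHom.ext fun z => by
    have := hzero z
    rw [ht1, neg_one_mul, ← sub_eq_add_neg, sub_eq_zero] at this
    exact this.symm)

theorem eq_diagonal_of_transpose_mul_hyperbolicPlane_mul [NeZero (2 : E)]
    {x : Matrix (Fin 2) (Fin 2) E} (hx : xᵀ * !![0, 1; 1, 0] * x = !![0, 1; 1, 0])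
    (hdet : x.det = 1) : x = diagonal ![x 0 0, (x 0 0)⁻¹] := by
  rw [det_fin_two] at hdet
  have h00 : x 1 0 * x 0 0 + x 0 0 * x 1 0 = 0 := by
    simpa [Matrix.mul_apply, Fin.sum_univ_two] using congrFun₂ hx 0 0
  have h01 : x 1 0 * x 0 1 + x 0 0 * x 1 1 = 1 := by
    simpa [Matrix.mul_apply, Fin.sum_univ_two] using congrFun₂ hx 0 1
  have h11 : x 1 1 * x 0 1 + x 0 1 * x 1 1 = 0 := by
    simpa [Matrix.mul_apply, Fin.sum_univ_two] using congrFun₂ hx 1 1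
  have hcross : x 0 1 * x 1 0 = 0 := by
    apply mul_left_cancel₀ (two_ne_zero' E)
    linear_combination h01 - hdet
  have hmul : x 0 0 * x 1 1 = 1 := by linear_combination hdet + hcross
  have h10 : x 1 0 = 0 := by
    apply mul_left_cancel₀ (two_ne_zero' E)
    linear_combination x 1 1 * h00 - 2 * x 1 0 * hmul
  have h01' : x 0 1 = 0 := by
    apply mul_left_cancel₀ (two_ne_zero' E)
    linear_combination x 0 0 * h11 - 2 * x 0 1 * hmul
  ext a b
  fin_cases a <;> fin_cases b <;> simp [h10, h01', eq_inv_of_mul_eq_one_right hmul]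

theorem forall_orbSG_hyperbolicPlane [NeZero (2 : E)] (hσσ : ∀ z, σ (σ z) = z)
    (hσ1 : σ ≠ RingHom.id E) (x : Matrix (Fin 2) (Fin 2) E) (hx : SXj σ !![0, 1; 1, 0] x) :
    orbSG σ !![0, 1; 1, 0] 1 x := by
  obtain ⟨⟨⟨-, hxH⟩, hxσ⟩, hdet⟩ := hx
  have hdiag := eq_diagonal_of_transpose_mul_hyperbolicPlane_mul hxH hdet
  have ht : x 0 0 * σ (x 0 0) = 1 := by
    have h00 := congrFun₂ hxσ 0 0
    rw [hdiag] at h00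
    simpa [Matrix.mul_apply, Fin.sum_univ_two] using h00
  obtain ⟨s, hs0, hs⟩ := exists_ne_zero_mul_map_eq hσσ hσ1 ht
  have hsdet : (diagonal ![s, s⁻¹]).det = 1 := by simp [hs0]
  refine orbSG_iff_mul_map_eq.mpr ⟨diagonal ![s, s⁻¹],
    ⟨(isUnit_iff_isUnit_det _).mpr (hsdet ▸ isUnit_one), ?_⟩, hsdet, ?_⟩
  · ext a b
    fin_cases a <;> fin_cases b <;> simp [hs0]
  · rw [Matrix.mul_one, hdiag, diagonal_map (map_zero σ), diagonal_mul_diagonal]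
    congr! 1
    ext a
    fin_cases a
    · exact hs
    · simp [← mul_inv, hs]

theorem forall_orbSG_of_isSquare {F : Type*} [Field F] [NeZero (2 : F)] [Algebra F E]
    (hσσ : ∀ z, σ (σ z) = z) (hσ1 : σ ≠ RingHom.id E)
    (hσ : ∀ z, σ z = z ↔ z ∈ Set.range (algebraMap F E))
    {J : Matrix (Fin 2) (Fin 2) F} (hJ : Jᵀ = J) (hJ0 : J.det ≠ 0) (hdet : IsSquare (-J.det)) :
    ∀ x, SXj σ (J.map (algebraMap F E)) x → orbSG σ (J.map (algebraMap F E)) 1 x := by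
  obtain ⟨P, Q, hPQ, -, hP⟩ := isCongr_hyperbolicPlane hJ hJ0 hdet
  set ι := algebraMap F E
  have : NeZero (2 : E) := ⟨map_ofNat ι 2 ▸ (map_ne_zero ι).mpr (two_ne_zero' F)⟩
  have hPι : (P.map ι)ᵀ * J.map ι * P.map ι = !![0, 1; 1, 0] := by
    rw [← transpose_map, ← Matrix.map_mul, ← Matrix.map_mul, hP]
    ext a b
    fin_cases a <;> fin_cases b <;> simp
  have hPQι : P.map ι * Q.map ι = 1 := by
    rw [← Matrix.map_mul, hPQ, Matrix.map_one ι (map_zero ι) (map_one ι)]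
  refine forall_orbSG_of_congr hPQι (map_map_algebraMap_eq P hσ) (map_map_algebraMap_eq Q hσ) ?_
  rw [hPι]
  exact forall_orbSG_hyperbolicPlane hσσ hσ1

theorem forall_orbSG_fin_one (j : Matrix (Fin 1) (Fin 1) E) (x : Matrix (Fin 1) (Fin 1) E)
    (hx : SXj σ j x) : orbSG σ j 1 x := by
  have hx1 : x = 1 := by
    ext a b
    fin_cases a; fin_cases b
    simpa using hx.2
  exact hx1 ▸ orbSG_iff_mul_map_eq.mpr ⟨1, (sxj_one (σ := σ)).1.1, det_one, by simp⟩

end HyperbolicPlane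

section Criterion

theorem forall_orbSG_iff (p : ℕ) [Fact p.Prime] {F : Type*} {E : Type} [Field F] [Field E]
    [Algebra F E] [Algebra ℚ_[p] F] [FiniteDimensional ℚ_[p] F] {σ : E →+* E}
    (hσσ : ∀ z, σ (σ z) = z) (hσ : ∀ z, σ z = z ↔ z ∈ Set.range (algebraMap F E)) {ι : E}
    (hι : σ ι ≠ ι) (hιι : σ (ι * ι) = ι * ι) {n : ℕ} (hn : 1 ≤ n) {J : Matrix (Fin n) (Fin n) F}
    (hJ : Jᵀ = J) (hJ0 : J.det ≠ 0) :
    (∀ x, SXj σ (J.map (algebraMap F E)) x → orbSG σ (J.map (algebraMap F E)) 1 x) ↔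
      n = 1 ∨ n = 2 ∧ IsSquare (-J.det) := by
  have : CharZero F := charZero_of_injective_algebraMap (algebraMap ℚ_[p] F).injective
  constructor
  · intro horb
    obtain ⟨e, he⟩ := (hσ _).mp hιι
    have hesq : ¬ IsSquare e := by
      rintro ⟨s, rfl⟩
      rw [map_mul, mul_self_eq_mul_self_iff, ← neg_eq_iff_eq_neg, ← map_neg] at he
      exact hι ((hσ ι).mpr (he.elim (⟨_, ·⟩) (⟨_, ·⟩)))
    by_contra! hnot
    exact not_forall_orbSG p hσσ hσ hJ hJ0 (by omega) hnot.2 hesq ⟨ι, he⟩ horb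
  · rintro (rfl | ⟨rfl, hdet⟩)
    · exact forall_orbSG_fin_one _
    · exact forall_orbSG_of_isSquare hσσ (fun h => hι (h ▸ rfl)) hσ hJ hJ0 hdet

theorem apply_eq_iff_mem_range_algebraMap_fixedField {k E : Type*} [Field k] [Field E] [Algebra k E]
    (σ : E ≃ₐ[k] E) (z : E) : σ z = z ↔
      z ∈ Set.range (algebraMap (IntermediateField.fixedField (Subgroup.zpowers σ)) E) := by
  refine ⟨fun hz => ⟨⟨z, ?_⟩, rfl⟩, ?_⟩
  · rw [IntermediateField.mem_fixedField_iff]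
    exact fun τ hτ => (Subgroup.zpowers_le (H := MulAction.stabilizer (E ≃ₐ[k] E) z)).mpr hz hτ
  · rintro ⟨⟨w, hw⟩, rfl⟩
    exact (IntermediateField.mem_fixedField_iff _ _).mp hw σ (Subgroup.mem_zpowers σ)

theorem isSquare_iff_exists_algebraMap_eq {F E : Type*} [Field F] [Field E] [Algebra F E]
    {σ : E → E} (hσ : ∀ z, σ z = z ↔ z ∈ Set.range (algebraMap F E)) {d : F} (hd : d ≠ 0) :
    IsSquare (-d) ↔ ∃ c, σ c = c ∧ c ≠ 0 ∧ algebraMap F E d = -(c * c) := by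
  have hinj := (algebraMap F E).injective
  constructor
  · rintro ⟨c, hc⟩
    have hc0 : c ≠ 0 := left_ne_zero_of_mul (hc ▸ neg_ne_zero.mpr hd)
    refine ⟨algebraMap F E c, (hσ _).mpr ⟨c, rfl⟩, (map_ne_zero _).mpr hc0, ?_⟩
    rw [← map_mul, ← map_neg, ← hc, neg_neg]
  · rintro ⟨_, hc, -, hdc⟩
    obtain ⟨c, rfl⟩ := (hσ _).mp hc
    exact ⟨c, hinj (by rw [map_neg, hdc, neg_neg, map_mul])⟩

end Criterion

/-- In the orthogonal case, `SX^j` is a single `SG^j(E)`-orbit if and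
only if either `n = 1`, or `n = 2` and `det j ∈ -F^{×2}`.  (`F` is the fixed field of `σ`,
and `ι ∈ E \ F` satisfies `ι² ∈ F`.) -/
theorem stmt_11 (p : ℕ) [Fact p.Prime]
    (E : Type) [Field E] [Algebra ℚ_[p] E] [FiniteDimensional ℚ_[p] E]
    (σ : E ≃ₐ[ℚ_[p]] E) (hσ1 : σ ≠ 1) (hσ2 : σ * σ = 1)
    (ι : E) (hι1 : σ ι ≠ ι) (hι2 : σ (ι * ι) = ι * ι)
    (n : ℕ) (hn : 1 ≤ n)
    (j : Matrix (Fin n) (Fin n) E)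
    (hjF : ∀ a b, σ (j a b) = j a b) (hjU : IsUnit j) (hjsym : jᵀ = j) :
    (∃ x₀, SXj ⇑σ j x₀ ∧ ∀ x, SXj ⇑σ j x → orbSG ⇑σ j x₀ x) ↔
      (n = 1 ∨ (n = 2 ∧ ∃ c, σ c = c ∧ c ≠ 0 ∧ j.det = -(c * c))) := by
  let F := IntermediateField.fixedField (Subgroup.zpowers σ)
  have hσ : ∀ z, (σ : E →+* E) z = z ↔ z ∈ Set.range (algebraMap F E) :=
    apply_eq_iff_mem_range_algebraMap_fixedField σ
  have hσσ : ∀ z, (σ : E →+* E) ((σ : E →+* E) z) = z := DFunLike.congr_fun hσ2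
  obtain ⟨J, rfl⟩ := exists_map_algebraMap_eq (Matrix.ext hjF) hσ
  have hdet : (J.map (algebraMap F E)).det = algebraMap F E J.det :=
    ((algebraMap F E).map_det J).symm
  have hJ : Jᵀ = J := Matrix.map_injective (algebraMap F E).injective hjsym
  have hJ0 : J.det ≠ 0 := by
    rwa [isUnit_iff_isUnit_det, hdet, isUnit_iff_ne_zero, map_ne_zero] at hjU
  rw [hdet]
  exact exists_forall_orbSG_iff.trans ((forall_orbSG_iff p hσσ hσ hι1 hι2 hn hJ hJ0).trans
    (or_congr_right (and_congr_right fun _ => isSquare_iff_exists_algebraMap_eq hσ hJ0)))
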